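/- arXiv:2003.13207 — 2 statements merged into one kernel-verified Lean document; each statement's English description precedes it below -/
import Mathlib

section
/- For all ordinals α < ε₀ and natural numbers n ≤ m: if α <_n β then α <_m β. (Monotonicity of the step-down relation in the base.) -/
open ONote in
/-- `α` is a successor ordinal notation (its Cantor normal form ends with `ω^0·m`). -/
def ONote.isSucc : ONote → Prop
  | ONote.zero => False
  | ONote.oadd e _ ONote.zero => e = 0
  | ONote.oadd _ _ (ONote.oadd e n a) => ONote.isSucc (ONote.oadd e n a)

instance : DecidablePred ONote.isSucc := by
  intro a
  induction a with
  | zero => exact .isFalse (by simp [ONote.isSucc])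
  | oadd e n a ihe iha =>
    cases a with
    | zero => exact decidable_of_iff (e = 0) Iff.rfl
    | oadd e' n' a' => exact iha

/-- The standard fundamental sequence assignment `α[x]` on Cantor normal forms:
`0[x] = 0`, `(α+1)[x] = α`, and for `λ` with last term `ω^(β+1)` one has
`λ[x] = (λ - ω^(β+1)) + ω^β·x`, while for last term `ω^γ` (`γ` limit),
`λ[x] = (λ - ω^γ) + ω^(γ[x])`. -/
def ONote.fseq : ONote → ℕ → ONote
  | ONote.zero, _ => ONote.zero
  | ONote.oadd e m (ONote.oadd e' m' a'), x =>
      ONote.oadd e m (ONote.fseq (ONote.oadd e' m' a') x)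
  | ONote.oadd ONote.zero m ONote.zero, _ =>
      if _h : m = 1 then ONote.zero else ONote.oadd ONote.zero (m - 1) ONote.zero
  | ONote.oadd (ONote.oadd e1 m1 a1) m ONote.zero, x =>
      let e := ONote.oadd e1 m1 a1
      let tail : ONote → ONote :=
        fun t => if m = 1 then t else ONote.oadd e (m - 1) t
      if ONote.isSucc e then
        match x with
        | 0 => tail ONote.zero
        | Nat.succ y => tail (ONote.oadd (ONote.fseq e (y+1)) (Nat.succPNat y) ONote.zero)
      else tail (ONote.oadd (ONote.fseq e x) 1 ONote.zero)

/-- `α <_n β` : transitive closure of `α = β[n]`. -/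
def ONote.stepLt (n : ℕ) (a b : ONote) : Prop :=
  Relation.TransGen (fun x y => x = ONote.fseq y n) a b

/-- `α ≤_n β`. -/
def ONote.stepLe (n : ℕ) (a b : ONote) : Prop :=
  ONote.stepLt n a b ∨ a = b

/-- The graph of the Hardy hierarchy: `H_0(x) = x`, `H_{α+1}(x) = H_α(x+1)`,
`H_λ(x) = H_{λ[x]}(x)` for limit `λ`. -/
inductive HardyRel : ONote → ℕ → ℕ → Prop
  | zero (x : ℕ) : HardyRel ONote.zero x x
  | succ {a : ONote} {x y : ℕ} (h : a.isSucc) (hrec : HardyRel (a.fseq x) (x + 1) y) :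
      HardyRel a x y
  | limit {a : ONote} {x y : ℕ} (h0 : a ≠ ONote.zero) (h : ¬ a.isSucc)
      (hrec : HardyRel (a.fseq x) x y) : HardyRel a x y

open scoped Classical in
/-- The Hardy function `H_α : ℕ → ℕ` (for `α` in normal form the defining
recursion terminates, so `hardy` is the unique value of the graph `HardyRel`). -/
noncomputable def hardy (a : ONote) (x : ℕ) : ℕ :=
  if h : ∃ y, HardyRel a x y then h.choose else 0

namespace ONote

/-- One step `b ↦ b[n]` of the descent, taken from a nonzero `b` only. -/
def properStep (n : ℕ) (a b : ONote) : Prop :=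
  b ≠ zero ∧ a = fseq b n

theorem fseq_oadd_of_ne_zero (e : ONote) (k : ℕ+) {s : ONote} (hs : s ≠ zero) (x : ℕ) :
    fseq (oadd e k s) x = oadd e k (fseq s x) := by
  cases s with
  | zero => exact absurd rfl hs
  | oadd e' k' s' => simp only [fseq]

theorem fseq_oadd_add_one (e : ONote) (k : ℕ+) (x : ℕ) :
    fseq (oadd e (k + 1) zero) x = oadd e k (fseq (oadd e 1 zero) x) := by
  have h1 : k + 1 ≠ 1 := (PNat.lt_add_left 1 k).ne'
  have h2 : k + 1 - 1 = k := PNat.add_sub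
  cases e with
  | zero => simp [fseq, h1, h2]
  | oadd e₁ m₁ a₁ => cases x <;> simp only [fseq, h1, h2] <;> split_ifs <;> simp_all

theorem fseq_omega_of_isSucc_zero {e : ONote} (h : e.isSucc) :
    fseq (oadd e 1 zero) 0 = zero := by
  cases e with
  | zero => exact h.elim
  | oadd e₁ m₁ a₁ => simp [fseq, h]

theorem fseq_omega_of_isSucc_succ {e : ONote} (h : e.isSucc) (y : ℕ) :
    fseq (oadd e 1 zero) (y + 1) = oadd (fseq e (y + 1)) y.succPNat zero := by
  cases e with
  | zero => exact h.elim
  | oadd e₁ m₁ a₁ => simp [fseq, h]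

theorem fseq_omega_of_not_isSucc {e : ONote} (h0 : e ≠ zero) (h : ¬ e.isSucc) (x : ℕ) :
    fseq (oadd e 1 zero) x = oadd (fseq e x) 1 zero := by
  cases e with
  | zero => exact absurd rfl h0
  | oadd e₁ m₁ a₁ => simp [fseq, h]

theorem fseq_eq_of_isSucc {a : ONote} (h : a.isSucc) (x y : ℕ) : fseq a x = fseq a y := by
  induction a with
  | zero => exact h.elim
  | oadd e k s _ ihs =>
    cases s with
    | zero =>
      obtain rfl : e = zero := h
      simp only [fseq]
    | oadd e' k' s' =>
      simp only [fseq]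
      rw [ihs h]

open Relation

theorem properStep_fseq {n : ℕ} {b : ONote} (hb : b ≠ zero) : properStep n (fseq b n) b :=
  ⟨hb, rfl⟩

theorem properStep.oadd {n : ℕ} {a b : ONote} (e : ONote) (k : ℕ+) (h : properStep n a b) :
    properStep n (oadd e k a) (oadd e k b) :=
  ⟨nofun, by rw [fseq_oadd_of_ne_zero e k h.1, h.2]⟩

theorem reflTransGen_properStep_oadd {n : ℕ} {a b : ONote} (e : ONote) (k : ℕ+)
    (h : ReflTransGen (properStep n) a b) :
    ReflTransGen (properStep n) (oadd e k a) (oadd e k b) :=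
  h.lift _ fun _ _ h => h.oadd e k

/-- If `(ω ^ e)[n]` descends to `0`, then so does `ω ^ e * k`. -/
theorem zero_reflTransGen_oadd_zero {n : ℕ} {e : ONote}
    (h : ReflTransGen (properStep n) zero (fseq (oadd e 1 zero) n)) (k : ℕ+) :
    ReflTransGen (properStep n) zero (oadd e k zero) := by
  induction k using PNat.recOn with
  | one => exact h.tail (properStep_fseq nofun)
  | succ k ih =>
    refine ih.trans (ReflTransGen.tail ?_ (properStep_fseq nofun))
    rw [fseq_oadd_add_one]
    exact reflTransGen_properStep_oadd e k h

theorem zero_reflTransGen_properStep (n : ℕ) (a : ONote) :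
    ReflTransGen (properStep n) zero a := by
  induction a with
  | zero => exact .refl
  | oadd e k s ihe ihs =>
    refine ReflTransGen.trans ?_ (reflTransGen_properStep_oadd e k ihs)
    clear ihs
    induction ihe generalizing k with
    | refl => exact zero_reflTransGen_oadd_zero (by simpa [fseq] using .refl) k
    | @tail c d _ hcd ih =>
      apply zero_reflTransGen_oadd_zero
      obtain ⟨hd, rfl⟩ := hcd
      by_cases hs : d.isSucc
      · cases n with
        | zero => rw [fseq_omega_of_isSucc_zero hs]
        | succ y =>
          rw [fseq_omega_of_isSucc_succ hs]
          exact ih _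
      · rw [fseq_omega_of_not_isSucc hd hs]
        exact ih _

theorem reflTransGen_properStep_oadd_add_one (n : ℕ) (e : ONote) (k : ℕ+) :
    ReflTransGen (properStep n) (oadd e k zero) (oadd e (k + 1) zero) := by
  refine ReflTransGen.tail ?_ (properStep_fseq nofun)
  rw [fseq_oadd_add_one]
  exact reflTransGen_properStep_oadd e k (zero_reflTransGen_properStep n _)

theorem reflTransGen_properStep_oadd_of_le (n : ℕ) (e : ONote) {j k : ℕ+} (h : j ≤ k) :
    ReflTransGen (properStep n) (oadd e j zero) (oadd e k zero) := by
  induction k using PNat.recOn with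
  | one => rw [le_antisymm h one_le]
  | succ k ih =>
    rcases h.eq_or_lt with rfl | h
    · exact .refl
    · exact (ih (PNat.lt_add_one_iff.1 h)).trans (reflTransGen_properStep_oadd_add_one n e k)

theorem reflTransGen_properStep_omega {n : ℕ} (hn : 0 < n) {a b : ONote}
    (h : ReflTransGen (properStep n) a b) :
    ReflTransGen (properStep n) (oadd a 1 zero) (oadd b 1 zero) := by
  induction h with
  | refl => exact .refl
  | @tail c d _ hcd ih =>
    refine ih.trans (ReflTransGen.tail ?_ (properStep_fseq nofun))
    obtain ⟨hd, rfl⟩ := hcd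
    by_cases hs : d.isSucc
    · obtain ⟨y, rfl⟩ := Nat.exists_eq_add_one.2 hn
      rw [fseq_omega_of_isSucc_succ hs]
      exact reflTransGen_properStep_oadd_of_le _ _ one_le
    · rw [fseq_omega_of_not_isSucc hd hs]

/-- The fundamental sequences are monotone along the descent of larger base. -/
theorem fseq_reflTransGen_fseq {n m : ℕ} (hnm : n ≤ m) (b : ONote) :
    ReflTransGen (properStep m) (fseq b n) (fseq b m) := by
  rcases hnm.eq_or_lt with rfl | hlt
  · exact .refl
  induction b with
  | zero => exact .refl
  | oadd e k s ihe ihs =>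
    by_cases hs : s = zero
    · subst hs
      suffices h : ReflTransGen (properStep m) (fseq (oadd e 1 zero) n)
          (fseq (oadd e 1 zero) m) by
        cases k using PNat.recOn with
        | one => exact h
        | succ k =>
          rw [fseq_oadd_add_one, fseq_oadd_add_one]
          exact reflTransGen_properStep_oadd e k h
      by_cases he : e = zero
      · subst he
        simpa [fseq] using .refl
      by_cases hsucc : e.isSucc
      · obtain ⟨z, rfl⟩ := Nat.exists_eq_add_one.2 (Nat.zero_lt_of_lt hlt)
        cases n with
        | zero =>
          rw [fseq_omega_of_isSucc_zero hsucc]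
          exact zero_reflTransGen_properStep _ _
        | succ y =>
          rw [fseq_omega_of_isSucc_succ hsucc, fseq_omega_of_isSucc_succ hsucc,
            fseq_eq_of_isSucc hsucc (y + 1) (z + 1)]
          exact reflTransGen_properStep_oadd_of_le _ _ (Nat.succPNat_le_succPNat.2 (by omega))
      · rw [fseq_omega_of_not_isSucc he hsucc, fseq_omega_of_not_isSucc he hsucc]
        exact reflTransGen_properStep_omega (Nat.zero_lt_of_lt hlt) ihe
    · rw [fseq_oadd_of_ne_zero e k hs, fseq_oadd_of_ne_zero e k hs]
      exact reflTransGen_properStep_oadd e k ihs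

theorem stepLt_fseq_of_le {n m : ℕ} (hnm : n ≤ m) (b : ONote) : stepLt m (fseq b n) b :=
  TransGen.tail' (ReflTransGen.mono (fun _ _ h => h.2) _ _ (fseq_reflTransGen_fseq hnm b)) rfl

end ONote

/-- monotonicity of the step-down relation `<_n` in the base:
if `n ≤ m` and `α <_n β` then `α <_m β`. -/
theorem stepLt_mono_base (a b : ONote) (ha : a.NF) (hb : b.NF) (n m : ℕ)
    (hnm : n ≤ m) (h : ONote.stepLt n a b) : ONote.stepLt m a b := by
  clear ha hb
  induction h with
  | single h => exact h ▸ ONote.stepLt_fseq_of_le hnm _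
  | tail _ h ih => exact ih.trans (h ▸ ONote.stepLt_fseq_of_le hnm _)
end

section
/- Every provably total computable function of PA is dominated by a Hardy function: if PA proves ∀x ∃y θ(x,y) for a Δ₀-formula θ, then there exists an ordinal γ < ε₀ such that for all n ≥ 2 there exists y < H_γ(n) with ℕ ⊨ θ(n,y). -/
open FirstOrder FirstOrder.Language

/-- Function symbols of the language of PA: `0, 1, +, ·, x^y`. -/
inductive ArithFunc : ℕ → Type
  | zero : ArithFunc 0
  | one : ArithFunc 0
  | add : ArithFunc 2
  | mul : ArithFunc 2
  | exp : ArithFunc 2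

/-- Relation symbols of the language of PA: `<` (equality is built in). -/
inductive ArithRel : ℕ → Type
  | lt : ArithRel 2

/-- The first-order language `{0, 1, +, ·, x^y, <, =}` of PA. -/
def LPA : FirstOrder.Language := ⟨ArithFunc, ArithRel⟩

/-- The standard model `ℕ`. -/
instance : LPA.Structure ℕ where
  funMap {n} f v :=
    match f with
    | ArithFunc.zero => 0
    | ArithFunc.one => 1
    | ArithFunc.add => v 0 + v 1
    | ArithFunc.mul => v 0 * v 1
    | ArithFunc.exp => v 0 ^ v 1
  RelMap {n} r v :=
    match r with
    | ArithRel.lt => v 0 < v 1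

section Model

variable {M : Type} [LPA.Structure M]

/-- Interpretation of `0`. -/
def pzero : M := Structure.funMap (L := LPA) ArithFunc.zero ![]
/-- Interpretation of `1`. -/
def pone : M := Structure.funMap (L := LPA) ArithFunc.one ![]
/-- Interpretation of `+`. -/
def padd (a b : M) : M := Structure.funMap (L := LPA) ArithFunc.add ![a, b]
/-- Interpretation of `·`. -/
def pmul (a b : M) : M := Structure.funMap (L := LPA) ArithFunc.mul ![a, b]
/-- Interpretation of `x^y`. -/
def pexp (a b : M) : M := Structure.funMap (L := LPA) ArithFunc.exp ![a, b]
/-- Interpretation of `<`. -/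
def plt (a b : M) : Prop := Structure.RelMap (L := LPA) ArithRel.lt ![a, b]

end Model

/-- `M` is a model of PA: the basic (Π₁) axioms for the constants
`0, 1, +, ·, x^y, <` hold, together with the induction scheme for all
first-order `LPA`-formulas (with parameters). -/
def IsPAModel (M : Type) [LPA.Structure M] : Prop :=
  (∀ a : M, padd a pzero = a) ∧
  (∀ a b : M, padd a b = padd b a) ∧
  (∀ a b c : M, padd (padd a b) c = padd a (padd b c)) ∧
  (∀ a : M, pmul a pzero = pzero) ∧
  (∀ a : M, pmul a pone = a) ∧
  (∀ a b : M, pmul a b = pmul b a) ∧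
  (∀ a b c : M, pmul (pmul a b) c = pmul a (pmul b c)) ∧
  (∀ a b c : M, pmul a (padd b c) = padd (pmul a b) (pmul a c)) ∧
  (∀ a : M, ¬ plt a a) ∧
  (∀ a b c : M, plt a b → plt b c → plt a c) ∧
  (∀ a b : M, plt a b ∨ a = b ∨ plt b a) ∧
  (∀ a b c : M, plt a b → plt (padd a c) (padd b c)) ∧
  (∀ a : M, a = pzero ∨ plt pzero a) ∧
  (∀ a : M, plt a (padd a pone)) ∧
  (∀ a b : M, plt a b → (padd a pone = b ∨ plt (padd a pone) b)) ∧
  (∀ a : M, pexp a pzero = pone) ∧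
  (∀ a b : M, pexp a (padd b pone) = pmul (pexp a b) a) ∧
  (∀ (n : ℕ) (φ : LPA.BoundedFormula Empty (n + 1)) (v : Fin n → M),
    φ.Realize (fun e => e.elim) (Fin.snoc v pzero) →
    (∀ x : M, φ.Realize (fun e => e.elim) (Fin.snoc v x) →
      φ.Realize (fun e => e.elim) (Fin.snoc v (padd x pone))) →
    ∀ x : M, φ.Realize (fun e => e.elim) (Fin.snoc v x))

/-- `PA ⊢ σ`, rendered (equivalently, by the Gödel completeness theorem) as:
`σ` holds in every model of PA. -/
def PAproves (σ : LPA.Sentence) : Prop :=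
  ∀ (M : Type) (_ : LPA.Structure M), IsPAModel M → M ⊨ σ

/-- The bounded formula `t₁ < t₂`. -/
def ltBF {n : ℕ} (t₁ t₂ : LPA.Term (Empty ⊕ Fin n)) : LPA.BoundedFormula Empty n :=
  Relations.boundedFormula₂ ArithRel.lt t₁ t₂

/-- Lift a term in context `n` to context `n + 1`. -/
def liftT {n : ℕ} (t : LPA.Term (Empty ⊕ Fin n)) : LPA.Term (Empty ⊕ Fin (n + 1)) :=
  t.relabel (Sum.map id Fin.castSucc)

/-- The guard `x_n < t` on the last variable of context `n + 1`. -/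
def guardLt {n : ℕ} (t : LPA.Term (Empty ⊕ Fin n)) : LPA.BoundedFormula Empty (n + 1) :=
  ltBF (Term.var (Sum.inr (Fin.last n))) (liftT t)

/-- The class of `Δ₀` (bounded) formulas: atomic formulas, closed under `⊥`,
`→` (hence all propositional connectives) and bounded quantification
`∀ x < t` and `∃ x < t`. -/
inductive Delta0 : ∀ {n : ℕ}, LPA.BoundedFormula Empty n → Prop
  | falsum {n : ℕ} : Delta0 (n := n) BoundedFormula.falsum
  | equal {n : ℕ} (t₁ t₂ : LPA.Term (Empty ⊕ Fin n)) : Delta0 (Term.bdEqual t₁ t₂)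
  | lt {n : ℕ} (t₁ t₂ : LPA.Term (Empty ⊕ Fin n)) : Delta0 (ltBF t₁ t₂)
  | imp {n : ℕ} {φ ψ : LPA.BoundedFormula Empty n} :
      Delta0 φ → Delta0 ψ → Delta0 (φ.imp ψ)
  | bdAll {n : ℕ} (t : LPA.Term (Empty ⊕ Fin n)) {φ : LPA.BoundedFormula Empty (n + 1)} :
      Delta0 φ → Delta0 ((guardLt t).imp φ).all
  | bdEx {n : ℕ} (t : LPA.Term (Empty ⊕ Fin n)) {φ : LPA.BoundedFormula Empty (n + 1)} :
      Delta0 φ → Delta0 ((guardLt t).imp φ.not).all.not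

namespace ONote

theorem NF.trichotomy {a b : ONote} (ha : NF a) (hb : NF b) : a < b ∨ a = b ∨ b < a := by
  rcases lt_trichotomy (repr a) (repr b) with h | h | h
  · exact .inl h
  · exact .inr (.inl (repr_inj.1 h))
  · exact .inr (.inr h)

theorem NF.lt_of_le_of_ne {a b : ONote} (ha : NF a) (hb : NF b) (h : a ≤ b) (hne : a ≠ b) :
    a < b := by
  rcases ha.trichotomy hb with h' | h' | h'
  · exact h'
  · exact absurd h' hne
  · exact absurd h (not_le_of_gt h')

theorem not_lt_zero_note (a : ONote) : ¬ a < 0 := by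
  intro h
  simp [lt_def] at h

theorem zero_le_note (a : ONote) : 0 ≤ a := by simp [le_def]

theorem NF.oadd_of_lt {e : ONote} {n : ℕ+} {a : ONote} (he : NF e) (ha : NF a)
    (h : a < ONote.oadd e 1 0) : NF (ONote.oadd e n a) := by
  refine NF.oadd he n (NF.below_of_lt' ?_ ha)
  simpa [lt_def] using h

theorem NF.snd_lt {e : ONote} {n : ℕ+} {a : ONote} (h : NF (ONote.oadd e n a)) :
    a < ONote.oadd e 1 0 := by
  simpa [lt_def] using h.snd'.repr_lt

theorem oadd_lt_oadd_iff {e e' : ONote} {n n' : ℕ+} {a a' : ONote} (h : NF (oadd e n a))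
    (h' : NF (oadd e' n' a')) :
    oadd e n a < oadd e' n' a' ↔ e < e' ∨ e = e' ∧ (n < n' ∨ n = n' ∧ a < a') := by
  have key : ∀ {e e' : ONote} {n n' : ℕ+} {a a' : ONote}, NF (oadd e n a) →
      (e < e' ∨ e = e' ∧ (n < n' ∨ n = n' ∧ a < a')) → oadd e n a < oadd e' n' a' := by
    rintro e e' n n' a a' h (h1 | ⟨rfl, h1 | ⟨rfl, h1⟩⟩)
    · exact oadd_lt_oadd_1 h h1
    · exact oadd_lt_oadd_2 h h1
    · exact oadd_lt_oadd_3 h1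
  refine ⟨fun hlt => ?_, key h⟩
  rcases h.fst.trichotomy h'.fst with h1 | rfl | h1
  · exact .inl h1
  · rcases lt_trichotomy n n' with h2 | rfl | h2
    · exact .inr ⟨rfl, .inl h2⟩
    · rcases h.snd.trichotomy h'.snd with h3 | rfl | h3
      · exact .inr ⟨rfl, .inr ⟨rfl, h3⟩⟩
      · exact absurd hlt (lt_irrefl _)
      · exact absurd hlt (lt_asymm (oadd_lt_oadd_3 h3))
    · exact absurd hlt (lt_asymm (oadd_lt_oadd_2 h' h2))
  · exact absurd hlt (lt_asymm (oadd_lt_oadd_1 h' h1))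

/-- The largest coefficient occurring hereditarily in the Cantor normal form. -/
def maxCoeff : ONote → ℕ
  | zero => 0
  | oadd e n a => max (maxCoeff e) (max n (maxCoeff a))

@[simp] theorem maxCoeff_zero : maxCoeff 0 = 0 := rfl

@[simp] theorem maxCoeff_oadd (e : ONote) (n : ℕ+) (a : ONote) :
    maxCoeff (oadd e n a) = max (maxCoeff e) (max n (maxCoeff a)) := rfl

/-- `ω ^ e * (m - 1) + t`. -/
def replaceLast (e : ONote) (m : ℕ+) (t : ONote) : ONote :=
  if m = 1 then t else oadd e (m - 1) t

/-- The fundamental sequence of `ω ^ e` for `e ≠ 0`. -/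
def fseqOpow (e : ONote) (x : ℕ) : ONote :=
  if isSucc e then
    match x with
    | 0 => 0
    | Nat.succ y => oadd (fseq e (y + 1)) (Nat.succPNat y) 0
  else oadd (fseq e x) 1 0

theorem fseq_oadd_zero {e : ONote} (he : e ≠ 0) (m : ℕ+) (x : ℕ) :
    fseq (oadd e m 0) x = replaceLast e m (fseqOpow e x) := by
  cases e with
  | zero => exact absurd rfl he
  | oadd e1 m1 a1 =>
    change fseq (oadd (oadd e1 m1 a1) m zero) x = _
    rw [fseq.eq_def]
    unfold replaceLast fseqOpow
    by_cases h1 : m = 1 <;> by_cases h2 : isSucc (oadd e1 m1 a1) <;> cases x <;>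
      simp only [h1, h2, if_true, if_false] <;> rfl

theorem fseq_oadd_of_ne_zero_s16 (e : ONote) (m : ℕ+) {a : ONote} (ha : a ≠ 0) (x : ℕ) :
    fseq (oadd e m a) x = oadd e m (fseq a x) := by
  cases a with
  | zero => exact absurd rfl ha
  | oadd e' m' a' => rw [fseq]

theorem isSucc_oadd_of_ne_zero (e : ONote) (m : ℕ+) {a : ONote} (ha : a ≠ 0) :
    isSucc (oadd e m a) ↔ isSucc a := by
  cases a with
  | zero => exact absurd rfl ha
  | oadd e' m' a' => rw [isSucc]

theorem fseq_zero_one (x : ℕ) : fseq (oadd 0 1 0) x = 0 := by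
  change fseq (oadd zero 1 zero) x = _
  rw [fseq]; simp

theorem fseq_oadd_zero_zero {m : ℕ+} (hm : m ≠ 1) (x : ℕ) :
    fseq (oadd 0 m 0) x = oadd 0 (m - 1) 0 := by
  change fseq (oadd zero m zero) x = _
  rw [fseq]; simp [hm]

theorem _root_.PNat.lt_sub_one_or_eq {c m : ℕ+} (h : c < m) (hm : m ≠ 1) :
    c < m - 1 ∨ c = m - 1 := by
  have h1 : ((m - 1 : ℕ+) : ℕ) = m - 1 := by
    rw [PNat.sub_coe, if_pos]
    · rfl
    · exact lt_of_le_of_ne one_le (Ne.symm hm)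
  have : (c : ℕ) < m := h
  rcases lt_or_eq_of_le (show (c : ℕ) ≤ (m - 1 : ℕ+) by omega) with h | h
  · exact .inl h
  · exact .inr (PNat.coe_injective h)

theorem _root_.PNat.sub_one_lt_self {m : ℕ+} (hm : m ≠ 1) : m - 1 < m := by
  have h1 : ((m - 1 : ℕ+) : ℕ) = m - 1 := by
    rw [PNat.sub_coe, if_pos]
    · rfl
    · exact lt_of_le_of_ne one_le (Ne.symm hm)
  have := m.pos
  exact (show ((m - 1 : ℕ+) : ℕ) < m by omega)

theorem replaceLast_spec {e t : ONote} {m : ℕ+} (he : NF e) (ht : NF t) (h : t < oadd e 1 0) :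
    NF (replaceLast e m t) ∧ replaceLast e m t < oadd e m 0 := by
  unfold replaceLast
  split_ifs with hm
  · subst hm; exact ⟨ht, h⟩
  · exact ⟨he.oadd_of_lt ht h, oadd_lt_oadd_2 (he.oadd_of_lt ht h) (PNat.sub_one_lt_self hm)⟩

theorem NF.fseq_spec {a : ONote} (ha : NF a) (x : ℕ) :
    NF (fseq a x) ∧ (a ≠ 0 → fseq a x < a) := by
  induction a with
  | zero => exact ⟨NF.zero, fun h => absurd rfl h⟩
  | oadd e m a ihe iha =>
    by_cases h0 : a = 0
    · subst h0
      by_cases he : e = 0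
      · subst he
        by_cases hm : m = 1
        · subst hm
          rw [fseq_zero_one]
          exact ⟨NF.zero, fun _ => oadd_pos _ _ _⟩
        · rw [fseq_oadd_zero_zero hm]
          exact ⟨inferInstance, fun _ => oadd_lt_oadd_2 inferInstance (PNat.sub_one_lt_self hm)⟩
      · rw [fseq_oadd_zero he]
        have he1 := ihe ha.fst
        have hf := he1.1
        have : NF (fseqOpow e x) ∧ fseqOpow e x < ONote.oadd e 1 0 := by
          unfold fseqOpow
          split_ifs
          · cases x with
            | zero => exact ⟨NF.zero, oadd_pos _ _ _⟩
            | succ y =>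
              exact ⟨NF.oadd_zero _ _, oadd_lt_oadd_1 (NF.oadd_zero _ _) (he1.2 he)⟩
          · exact ⟨NF.oadd_zero _ _, oadd_lt_oadd_1 (NF.oadd_zero _ _) (he1.2 he)⟩
        have := replaceLast_spec (m := m) ha.fst this.1 this.2
        exact ⟨this.1, fun _ => this.2⟩
    · rw [fseq_oadd_of_ne_zero_s16 _ _ h0]
      have h1 := iha ha.snd
      exact ⟨ha.fst.oadd_of_lt h1.1 ((h1.2 h0).trans ha.snd_lt),
        fun _ => oadd_lt_oadd_3 (h1.2 h0)⟩

theorem le_replaceLast {e t b : ONote} {m : ℕ+} {x : ℕ} (he : NF e) (ht : NF t)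
    (hte : t < oadd e 1 0) (hb : NF b)
    (h : ∀ c, NF c → c < oadd e 1 0 → maxCoeff c < x → c < t)
    (hlt : b < oadd e m 0) (hx : maxCoeff b < x) : b < replaceLast e m t := by
  unfold replaceLast
  split_ifs with hm
  · subst hm; exact h b hb hlt hx
  · cases b with
    | zero => exact oadd_pos _ _ _
    | oadd d c b =>
      have hnf := he.oadd_of_lt (n := m - 1) ht hte
      rw [oadd_lt_oadd_iff hb (he.oadd_zero _ _)] at hlt
      rw [oadd_lt_oadd_iff hb hnf]
      rcases hlt with h1 | ⟨rfl, h1 | ⟨_, h1⟩⟩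
      · exact .inl h1
      · refine .inr ⟨rfl, ?_⟩
        rcases PNat.lt_sub_one_or_eq h1 hm with h2 | h2
        · exact .inl h2
        · refine .inr ⟨h2, h _ hb.snd hb.snd_lt ?_⟩
          simp only [maxCoeff_oadd] at hx
          omega
      · exact absurd h1 (not_lt_zero_note _)

theorem lt_fseqOpow {e c : ONote} {x : ℕ} (he : NF e) (hc : NF c)
    (h : ∀ b, NF b → b < e → maxCoeff b < x → b ≤ fseq e x ∧ (¬ isSucc e → b < fseq e x))
    (hlt : c < oadd e 1 0) (hx : maxCoeff c < x) : c < fseqOpow e x := by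
  have hf := (he.fseq_spec x).1
  cases c with
  | zero =>
    unfold fseqOpow
    split_ifs
    · cases x with
      | zero => exact absurd hx (Nat.not_lt_zero _)
      | succ y => exact oadd_pos _ _ _
    · exact oadd_pos _ _ _
  | oadd d k c =>
    rw [oadd_lt_oadd_iff hc (he.oadd_zero _ _)] at hlt
    simp only [maxCoeff_oadd] at hx
    have hde : d < e := by
      rcases hlt with h1 | ⟨_, h1 | ⟨_, h1⟩⟩
      · exact h1
      · exact absurd h1 (by simp)
      · exact absurd h1 (not_lt_zero_note _)
    obtain ⟨h1, h2⟩ := h d hc.fst hde (by omega)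
    unfold fseqOpow
    split_ifs with hs
    · cases x with
      | zero => omega
      | succ y =>
        by_cases hd : d = fseq e (y + 1)
        · rw [hd] at hc ⊢
          exact oadd_lt_oadd_2 hc (by simp; omega)
        · exact oadd_lt_oadd_1 hc (hc.fst.lt_of_le_of_ne hf h1 hd)
    · exact oadd_lt_oadd_1 hc (h2 hs)

/-- The Bachmann property of the fundamental sequences with respect to `maxCoeff`. -/
theorem NF.le_fseq {a b : ONote} {x : ℕ} (ha : NF a) (hb : NF b) (hlt : b < a)
    (hx : maxCoeff b < x) : b ≤ fseq a x ∧ (¬ isSucc a → b < fseq a x) := by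
  induction a generalizing b with
  | zero => exact absurd hlt (not_lt_zero_note _)
  | oadd e m a ihe iha =>
    by_cases h0 : a = 0
    · subst h0
      by_cases he : e = 0
      · subst he
        refine ⟨?_, fun h => absurd (show isSucc (ONote.oadd 0 m 0) from rfl) h⟩
        cases b with
        | zero => exact zero_le_note _
        | oadd d k b =>
          rw [oadd_lt_oadd_iff hb ha] at hlt
          rcases hlt with h1 | ⟨rfl, h1 | ⟨_, h1⟩⟩
          · exact absurd h1 (not_lt_zero_note _)
          · obtain rfl := hb.zero_of_zero rfl
            have hm : m ≠ 1 := by rintro rfl; exact absurd h1 (by simp)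
            rw [fseq_oadd_zero_zero hm]
            rcases PNat.lt_sub_one_or_eq h1 hm with h2 | rfl
            · exact le_of_lt (oadd_lt_oadd_2 hb h2)
            · exact le_rfl
          · exact absurd h1 (not_lt_zero_note _)
      · rw [fseq_oadd_zero he]
        have hf := (ha.fst.fseq_spec x)
        have hs : NF (fseqOpow e x) ∧ fseqOpow e x < ONote.oadd e 1 0 := by
          have := ((ha.fst.oadd_zero e 1).fseq_spec x)
          rw [fseq_oadd_zero he] at this
          simpa [replaceLast] using this
        have := le_replaceLast (m := m) ha.fst hs.1 hs.2 hb
          (fun c hc h1 h2 => lt_fseqOpow ha.fst hc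
            (fun b hb h1 h2 => ihe ha.fst hb h1 h2) h1 h2) hlt hx
        exact ⟨le_of_lt this, fun _ => this⟩
    · rw [fseq_oadd_of_ne_zero_s16 _ _ h0, isSucc_oadd_of_ne_zero _ _ h0]
      have hfa := ha.snd.fseq_spec x
      have hnf : NF (ONote.oadd e m (fseq a x)) :=
        ha.fst.oadd_of_lt hfa.1 ((hfa.2 h0).trans ha.snd_lt)
      cases b with
      | zero => exact ⟨zero_le_note _, fun _ => oadd_pos _ _ _⟩
      | oadd d k b =>
        rw [oadd_lt_oadd_iff hb ha] at hlt
        rcases hlt with h1 | ⟨rfl, h1 | ⟨rfl, h1⟩⟩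
        · exact ⟨le_of_lt (oadd_lt_oadd_1 hb h1), fun _ => oadd_lt_oadd_1 hb h1⟩
        · exact ⟨le_of_lt (oadd_lt_oadd_2 hb h1), fun _ => oadd_lt_oadd_2 hb h1⟩
        · simp only [maxCoeff_oadd] at hx
          obtain ⟨h2, h3⟩ := iha ha.snd hb.snd h1 (by omega)
          refine ⟨?_, fun h => oadd_lt_oadd_3 (h3 h)⟩
          by_cases h4 : b = fseq a x
          · rw [h4]
          · exact le_of_lt (oadd_lt_oadd_3 (hb.snd.lt_of_le_of_ne hfa.1 h2 h4))

/-- Among the notations below `a ≠ 0` with coefficients at most `m` there is a largest one. -/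
theorem NF.exists_greatest_below {a : ONote} (ha : NF a) (h0 : a ≠ 0) (m : ℕ) :
    ∃ b, NF b ∧ b < a ∧ maxCoeff b ≤ m ∧ ∀ c, NF c → c < a → maxCoeff c ≤ m → c ≤ b := by
  induction a using (inferInstance : WellFoundedRelation ONote).wf.induction with
  | h a ih =>
    obtain ⟨h1, h2⟩ := ha.fseq_spec (m + 1)
    have hle : ∀ c, NF c → c < a → maxCoeff c ≤ m → c ≤ fseq a (m + 1) := fun c hc hca hcm =>
      (ha.le_fseq hc hca (by omega)).1
    by_cases hm : maxCoeff (fseq a (m + 1)) ≤ m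
    · exact ⟨_, h1, h2 h0, hm, hle⟩
    · have hne : fseq a (m + 1) ≠ 0 := by rintro h; simp [h] at hm
      obtain ⟨b, hb, hba, hbm, hmax⟩ := ih _ (h2 h0) h1 hne
      refine ⟨b, hb, hba.trans (h2 h0), hbm, fun c hc hca hcm => hmax c hc ?_ hcm⟩
      refine hc.lt_of_le_of_ne h1 (hle c hc hca hcm) ?_
      rintro rfl
      exact hm hcm

/-- The number of terms of a Cantor normal form. -/
def termCount : ONote → ℕ
  | zero => 0
  | oadd _ _ a => termCount a + 1

/-- The Hessenberg (natural) sum of Cantor normal forms. -/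
def nsum : ONote → ONote → ONote
  | zero, b => b
  | oadd e n a, zero => oadd e n a
  | oadd e n a, oadd d k b =>
    match cmp e d with
    | .lt => oadd d k (nsum (oadd e n a) b)
    | .eq => oadd e (n + k) (nsum a b)
    | .gt => oadd e n (nsum a (oadd d k b))
termination_by a b => termCount a + termCount b
decreasing_by all_goals simp [termCount]; try omega

@[simp] theorem zero_nsum (b : ONote) : nsum 0 b = b := by
  change nsum zero b = b
  rw [nsum]

@[simp] theorem nsum_zero (a : ONote) : nsum a 0 = a := by
  cases a with
  | zero => exact zero_nsum 0
  | oadd e n a =>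
    change nsum (oadd e n a) zero = _
    rw [nsum]

theorem nsum_of_lt {e d : ONote} (he : NF e) (hd : NF d) (h : e < d) (n k : ℕ+) (a b : ONote) :
    nsum (oadd e n a) (oadd d k b) = oadd d k (nsum (oadd e n a) b) := by
  rw [nsum, (cmp_compares e d).eq_lt.2 h]

theorem nsum_of_eq {e : ONote} (he : NF e) (n k : ℕ+) (a b : ONote) :
    nsum (oadd e n a) (oadd e k b) = oadd e (n + k) (nsum a b) := by
  have : cmp e e = .eq := by
    cases h : cmp e e with
    | eq => rfl
    | lt => exact absurd ((cmp_compares e e).eq_lt.1 h) (lt_irrefl _)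
    | gt => exact absurd ((cmp_compares e e).eq_gt.1 h) (lt_irrefl _)
  rw [nsum, this]

theorem nsum_of_gt {e d : ONote} (he : NF e) (hd : NF d) (h : d < e) (n k : ℕ+) (a b : ONote) :
    nsum (oadd e n a) (oadd d k b) = oadd e n (nsum a (oadd d k b)) := by
  rw [nsum, (cmp_compares e d).eq_gt.2 h]

theorem oadd_lt_opow_iff {e d : ONote} {n : ℕ+} {a : ONote} (h : NF (oadd e n a)) (hd : NF d) :
    oadd e n a < oadd d 1 0 ↔ e < d := by
  rw [oadd_lt_oadd_iff h (hd.oadd_zero _ _)]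
  constructor
  · rintro (h | ⟨_, h | ⟨_, h⟩⟩)
    · exact h
    · exact absurd h (by simp)
    · exact absurd h (not_lt_zero_note _)
  · exact .inl

theorem nsum_spec {a b : ONote} (ha : NF a) (hb : NF b) :
    NF (nsum a b) ∧ (∀ d, NF d → a < oadd d 1 0 → b < oadd d 1 0 → nsum a b < oadd d 1 0) ∧
      maxCoeff (nsum a b) ≤ maxCoeff a + maxCoeff b := by
  match a, b with
  | zero, b => simpa using hb
  | oadd e n a, zero =>
    change NF (nsum _ 0) ∧ (∀ d, NF d → _ → _ → nsum _ 0 < _) ∧ maxCoeff (nsum _ 0) ≤ _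
    rw [nsum_zero]
    exact ⟨ha, fun _ _ h _ => h, Nat.le_add_right _ _⟩
  | oadd e n a, oadd d k b =>
    rcases ha.fst.trichotomy hb.fst with h | rfl | h
    · rw [nsum_of_lt ha.fst hb.fst h]
      obtain ⟨h1, h2, h3⟩ := nsum_spec ha hb.snd
      have hnf := hb.fst.oadd_of_lt (n := k) h1
        (h2 d hb.fst ((oadd_lt_opow_iff ha hb.fst).2 h) hb.snd_lt)
      refine ⟨hnf, fun c hc _ hb' => ?_, ?_⟩
      · rw [oadd_lt_opow_iff hnf hc]
        rwa [oadd_lt_opow_iff hb hc] at hb'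
      · simp only [maxCoeff_oadd] at h3 ⊢
        omega
    · rw [nsum_of_eq ha.fst]
      obtain ⟨h1, h2, h3⟩ := nsum_spec ha.snd hb.snd
      have hnf := hb.fst.oadd_of_lt (n := n + k) h1 (h2 e hb.fst ha.snd_lt hb.snd_lt)
      refine ⟨hnf, fun c hc _ hb' => ?_, ?_⟩
      · rw [oadd_lt_opow_iff hnf hc]
        rwa [oadd_lt_opow_iff hb hc] at hb'
      · simp only [maxCoeff_oadd, PNat.add_coe] at h3 ⊢
        omega
    · rw [nsum_of_gt ha.fst hb.fst h]
      obtain ⟨h1, h2, h3⟩ := nsum_spec ha.snd hb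
      have hnf := ha.fst.oadd_of_lt (n := n) h1
        (h2 e ha.fst ha.snd_lt ((oadd_lt_opow_iff hb ha.fst).2 h))
      refine ⟨hnf, fun c hc ha' _ => ?_, ?_⟩
      · rw [oadd_lt_opow_iff hnf hc]
        rwa [oadd_lt_opow_iff ha hc] at ha'
      · simp only [maxCoeff_oadd] at h3 ⊢
        omega
termination_by termCount a + termCount b
decreasing_by all_goals simp [termCount]; try omega

theorem NF.nsum {a b : ONote} (ha : NF a) (hb : NF b) : NF (nsum a b) := (nsum_spec ha hb).1

theorem maxCoeff_nsum_le {a b : ONote} (ha : NF a) (hb : NF b) :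
    maxCoeff (ONote.nsum a b) ≤ maxCoeff a + maxCoeff b := (nsum_spec ha hb).2.2

theorem nsum_comm {a b : ONote} (ha : NF a) (hb : NF b) : nsum a b = nsum b a := by
  match a, b with
  | zero, b => exact (zero_nsum b).trans (nsum_zero b).symm
  | oadd e n a, zero => exact (nsum_zero _).trans (zero_nsum _).symm
  | oadd e n a, oadd d k b =>
    rcases ha.fst.trichotomy hb.fst with h | rfl | h
    · rw [nsum_of_lt ha.fst hb.fst h, nsum_of_gt hb.fst ha.fst h, nsum_comm ha hb.snd]
    · rw [nsum_of_eq ha.fst, nsum_of_eq ha.fst, nsum_comm ha.snd hb.snd, add_comm]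
    · rw [nsum_of_gt ha.fst hb.fst h, nsum_of_lt hb.fst ha.fst h, nsum_comm ha.snd hb]
termination_by termCount a + termCount b
decreasing_by all_goals simp [termCount]; try omega

theorem nsum_lt_nsum_left {a c b : ONote} (ha : NF a) (hc : NF c) (hb : NF b) (h : a < c) :
    nsum a b < nsum c b := by
  match a, c, b with
  | _, zero, _ => exact absurd h (not_lt_zero_note _)
  | a, oadd e' n' c, zero =>
    change nsum a 0 < nsum _ 0
    rwa [nsum_zero, nsum_zero]
  | zero, oadd e' n' c, oadd d k b =>
    have hr := hc.nsum hb
    change nsum 0 _ < _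
    rw [zero_nsum]
    rcases hc.fst.trichotomy hb.fst with h1 | rfl | h1
    · rw [nsum_of_lt hc.fst hb.fst h1]
      have := nsum_lt_nsum_left NF.zero hc hb.snd h
      rw [zero_nsum] at this
      exact oadd_lt_oadd_3 this
    · rw [nsum_of_eq hc.fst]
      exact oadd_lt_oadd_2 hb (by simp)
    · rw [nsum_of_gt hc.fst hb.fst h1]
      exact oadd_lt_oadd_1 hb h1
  | oadd e n a, oadd e' n' c, oadd d k b =>
    have hl := ha.nsum hb
    have hlt := (oadd_lt_oadd_iff ha hc).1 h
    rcases hc.fst.trichotomy hb.fst with h1 | rfl | h1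
    · have h2 : e < d := by
        rcases hlt with h2 | ⟨rfl, _⟩
        · exact h2.trans h1
        · exact h1
      rw [nsum_of_lt hc.fst hb.fst h1, nsum_of_lt ha.fst hb.fst h2]
      exact oadd_lt_oadd_3 (nsum_lt_nsum_left ha hc hb.snd h)
    · rw [nsum_of_eq hc.fst]
      rcases hlt with h2 | ⟨rfl, h2⟩
      · rw [nsum_of_lt ha.fst hb.fst h2] at hl ⊢
        exact oadd_lt_oadd_2 hl (by simp)
      · rw [nsum_of_eq ha.fst] at hl ⊢
        rcases h2 with h2 | ⟨rfl, h2⟩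
        · exact oadd_lt_oadd_2 hl (by simpa using h2)
        · exact oadd_lt_oadd_3 (nsum_lt_nsum_left ha.snd hc.snd hb.snd h2)
    · rw [nsum_of_gt hc.fst hb.fst h1]
      rcases hlt with h2 | ⟨rfl, h2⟩
      · rcases ha.fst.trichotomy hb.fst with h3 | rfl | h3
        · rw [nsum_of_lt ha.fst hb.fst h3] at hl ⊢
          exact oadd_lt_oadd_1 hl h1
        · rw [nsum_of_eq ha.fst] at hl ⊢
          exact oadd_lt_oadd_1 hl h2
        · rw [nsum_of_gt ha.fst hb.fst h3] at hl ⊢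
          exact oadd_lt_oadd_1 hl h2
      · rw [nsum_of_gt ha.fst hb.fst h1] at hl ⊢
        rcases h2 with h2 | ⟨rfl, h2⟩
        · exact oadd_lt_oadd_2 hl h2
        · exact oadd_lt_oadd_3 (nsum_lt_nsum_left ha.snd hc.snd hb h2)
termination_by termCount c + termCount b
decreasing_by all_goals simp [termCount]; try omega

theorem nsum_lt_nsum_right {a c b : ONote} (ha : NF a) (hc : NF c) (hb : NF b) (h : a < c) :
    nsum b a < nsum b c := by
  rw [nsum_comm hb ha, nsum_comm hb hc]
  exact nsum_lt_nsum_left ha hc hb h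

theorem nsum_le_nsum {a c b d : ONote} (ha : NF a) (hc : NF c) (hb : NF b) (hd : NF d)
    (h : a ≤ c) (h' : b ≤ d) : nsum a b ≤ nsum c d := by
  have h1 : nsum a b ≤ nsum c b := by
    by_cases hac : a = c
    · rw [hac]
    · exact le_of_lt (nsum_lt_nsum_left ha hc hb (ha.lt_of_le_of_ne hc h hac))
  have h2 : nsum c b ≤ nsum c d := by
    by_cases hbd : b = d
    · rw [hbd]
    · exact le_of_lt (nsum_lt_nsum_right hb hd hc (hb.lt_of_le_of_ne hd h' hbd))
  exact h1.trans h2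

/-- The natural sum of `v 0, …, v (c - 1)`. -/
def nsumRange (v : ℕ → ONote) : ℕ → ONote
  | 0 => 0
  | c + 1 => nsum (nsumRange v c) (v c)

theorem nsumRange_spec {v : ℕ → ONote} {c B : ℕ} (hv : ∀ j < c, NF (v j) ∧ maxCoeff (v j) ≤ B) :
    NF (nsumRange v c) ∧ maxCoeff (nsumRange v c) ≤ c * B := by
  induction c with
  | zero => exact ⟨NF.zero, Nat.zero_le _⟩
  | succ c ih =>
    obtain ⟨h1, h2⟩ := ih fun j hj => hv j (by omega)
    obtain ⟨h3, h4⟩ := hv c (by omega)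
    refine ⟨h1.nsum h3, (maxCoeff_nsum_le h1 h3).trans ?_⟩
    rw [Nat.succ_mul]
    omega

theorem nsumRange_le {v w : ℕ → ONote} {c : ℕ} (hv : ∀ j < c, NF (v j)) (hw : ∀ j < c, NF (w j))
    (h : ∀ j < c, v j ≤ w j) : nsumRange v c ≤ nsumRange w c ∧
      ((∃ j < c, v j < w j) → nsumRange v c < nsumRange w c) := by
  have nf : ∀ {u : ℕ → ONote} {c : ℕ}, (∀ j < c, NF (u j)) → NF (nsumRange u c) := by
    intro u c hu
    induction c with
    | zero => exact NF.zero
    | succ c ih => exact (ih fun j hj => hu j (by omega)).nsum (hu c (by omega))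
  induction c with
  | zero => exact ⟨le_rfl, fun ⟨j, hj, _⟩ => absurd hj (Nat.not_lt_zero j)⟩
  | succ c ih =>
    have hv' := fun j (hj : j < c) => hv j (by omega)
    have hw' := fun j (hj : j < c) => hw j (by omega)
    obtain ⟨h1, h2⟩ := ih hv' hw' fun j hj => h j (by omega)
    have hvc := hv c (by omega)
    have hwc := hw c (by omega)
    refine ⟨nsum_le_nsum (nf hv') (nf hw') hvc hwc h1 (h c (by omega)), ?_⟩
    rintro ⟨j, hj, hlt⟩
    by_cases hjc : j = c
    · subst hjc
      exact (nsum_lt_nsum_right hvc hwc (nf hv') hlt).trans_le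
        (nsum_le_nsum (nf hv') (nf hw') hwc hwc h1 le_rfl)
    · exact (nsum_lt_nsum_left (nf hv') (nf hw') hvc (h2 ⟨j, by omega, hlt⟩)).trans_le
        (nsum_le_nsum (nf hw') (nf hw') hvc hwc le_rfl (h c (by omega)))

theorem nsumRange_opow {d : ONote} (hd : NF d) (c : ℕ) :
    nsumRange (fun _ => oadd d 1 0) (c + 1) = oadd d c.succPNat 0 := by
  induction c with
  | zero => exact zero_nsum _
  | succ c ih =>
    rw [nsumRange, ih, nsum_of_eq hd, nsum_zero]
    rfl

/-- `f` maps `X` strictly decreasingly below `α`, with coefficients controlled by `q`. -/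
structure IsDescent (q : ℕ → ℕ) (α : ONote) (X : Finset ℕ) (f : ℕ → ONote) : Prop where
  nf : ∀ x ∈ X, NF (f x)
  lt : ∀ x ∈ X, f x < α
  coeff : ∀ x ∈ X, maxCoeff (f x) ≤ q x
  anti : ∀ x ∈ X, ∀ y ∈ X, x < y → f y < f x

/-- `X` is `α`-large with respect to `q`: no `q`-controlled descent below `α` is indexed by `X`. -/
def IsLarge (q : ℕ → ℕ) (α : ONote) (X : Finset ℕ) : Prop := ¬ ∃ f, IsDescent q α X f

open scoped Classical in
/-- The value of `f` at the last element of `X` up to `x`, and `d` if there is none. -/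
noncomputable def lastValue (X : Finset ℕ) (f : ℕ → ONote) (d : ONote) (x : ℕ) : ONote :=
  if Nat.findGreatest (· ∈ X) x ∈ X then f (Nat.findGreatest (· ∈ X) x) else d

theorem lastValue_of_mem {X : Finset ℕ} (f : ℕ → ONote) (d : ONote) {x : ℕ} (hx : x ∈ X) :
    lastValue X f d x = f x := by
  classical
  have : Nat.findGreatest (· ∈ X) x = x := by
    apply le_antisymm (Nat.findGreatest_le _)
    exact Nat.le_findGreatest le_rfl hx
  rw [lastValue, this, if_pos hx]

theorem lastValue_cases (X : Finset ℕ) (f : ℕ → ONote) (d : ONote) (x : ℕ) :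
    (∃ z ∈ X, z ≤ x ∧ (∀ y ∈ X, y ≤ x → y ≤ z) ∧ lastValue X f d x = f z) ∨
      (∀ z ∈ X, x < z) ∧ lastValue X f d x = d := by
  classical
  by_cases h : Nat.findGreatest (· ∈ X) x ∈ X
  · exact .inl ⟨_, h, Nat.findGreatest_le _, fun y hy hyx => Nat.le_findGreatest hyx hy,
      by rw [lastValue, if_pos h]⟩
  · refine .inr ⟨fun z hz => ?_, by rw [lastValue, if_neg h]⟩
    by_contra hzx
    exact h (Nat.findGreatest_spec (P := (· ∈ X)) (not_lt.1 hzx) hz)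

namespace IsDescent

variable {q : ℕ → ℕ} {δ : ONote} {X : Finset ℕ} {f : ℕ → ONote}

theorem lastValue_spec (h : IsDescent q (oadd δ 1 0) X f) (hq : Monotone q) (hδ : NF δ) (x : ℕ)
    (hx : maxCoeff (oadd δ 1 0) ≤ q x) :
    NF (lastValue X f (oadd δ 1 0) x) ∧ lastValue X f (oadd δ 1 0) x ≤ oadd δ 1 0 ∧
      maxCoeff (lastValue X f (oadd δ 1 0) x) ≤ q x := by
  rcases lastValue_cases X f (oadd δ 1 0) x with ⟨z, hz, hzx, -, e⟩ | ⟨-, e⟩ <;> rw [e]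
  · exact ⟨h.nf z hz, le_of_lt (h.lt z hz), (h.coeff z hz).trans (hq hzx)⟩
  · exact ⟨hδ.oadd_zero _ _, le_rfl, hx⟩

theorem lastValue_antitone (h : IsDescent q (oadd δ 1 0) X f) {x y : ℕ} (hxy : x ≤ y) :
    lastValue X f (oadd δ 1 0) y ≤ lastValue X f (oadd δ 1 0) x := by
  rcases lastValue_cases X f (oadd δ 1 0) x with ⟨z, hz, hzx, hzm, e⟩ | ⟨hn, e⟩ <;>
    rcases lastValue_cases X f (oadd δ 1 0) y with ⟨w, hw, hwx, hwm, e'⟩ | ⟨hn', e'⟩ <;>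
    rw [e, e']
  · have := hwm z hz (hzx.trans hxy)
    rcases this.eq_or_lt with rfl | hlt
    · exact le_rfl
    · exact le_of_lt (h.anti z hz w hw hlt)
  · exact absurd (hn' z hz) (not_lt.2 (hzx.trans hxy))
  · exact le_of_lt (h.lt w hw)

theorem lastValue_lt (h : IsDescent q (oadd δ 1 0) X f) {x y : ℕ} (hxy : x < y) (hy : y ∈ X) :
    lastValue X f (oadd δ 1 0) y < lastValue X f (oadd δ 1 0) x := by
  rw [lastValue_of_mem f _ hy]
  rcases lastValue_cases X f (oadd δ 1 0) x with ⟨z, hz, hzx, -, e⟩ | ⟨-, e⟩ <;> rw [e]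
  · exact h.anti z hz y hy (hzx.trans_lt hxy)
  · exact h.lt y hy

theorem mono {q q' : ℕ → ℕ} {α α' : ONote} {Y : Finset ℕ} (h : IsDescent q α X f)
    (hY : Y ⊆ X) (hα : α ≤ α') (hq : ∀ x ∈ Y, q x ≤ q' x) : IsDescent q' α' Y f where
  nf x hx := h.nf x (hY hx)
  lt x hx := (h.lt x (hY hx)).trans_le hα
  coeff x hx := (h.coeff x (hY hx)).trans (hq x hx)
  anti x hx y hy := h.anti x (hY hx) y (hY hy)

end IsDescent

/-- Pigeonhole principle for descents. -/
theorem exists_isDescent_of_classes {q : ℕ → ℕ} {δ : ONote} {X : Finset ℕ} (hq : Monotone q)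
    (hδ : NF δ) (hX : ∀ x ∈ X, maxCoeff (oadd δ 1 0) ≤ q x) (c : ℕ) (col : ℕ → ℕ)
    (hcol : ∀ x ∈ X, col x < c + 1)
    (h : ∀ j < c + 1, ∃ f, IsDescent q (oadd δ 1 0) (X.filter (col · = j)) f) :
    ∃ f, IsDescent (fun x => (c + 1) * q x) (oadd δ c.succPNat 0) X f := by
  choose! f hf using h
  let v : ℕ → ℕ → ONote := fun x j => lastValue (X.filter (col · = j)) (f j) (oadd δ 1 0) x
  have hv : ∀ x ∈ X, ∀ j < c + 1, NF (v x j) ∧ v x j ≤ oadd δ 1 0 ∧ maxCoeff (v x j) ≤ q x :=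
    fun x hx j hj => (hf j hj).lastValue_spec hq hδ x (hX x hx)
  refine ⟨fun x => nsumRange (v x) (c + 1), fun x hx => ?_, fun x hx => ?_, fun x hx => ?_,
    fun x hx y hy hxy => ?_⟩
  · exact (nsumRange_spec fun j hj => ⟨(hv x hx j hj).1, (hv x hx j hj).2.2⟩).1
  · rw [← nsumRange_opow hδ]
    refine (nsumRange_le (fun j hj => (hv x hx j hj).1) (fun _ _ => hδ.oadd_zero _ _)
      (fun j hj => (hv x hx j hj).2.1)).2 ⟨col x, hcol x hx, ?_⟩
    have hm : x ∈ X.filter (col · = col x) := by simp [hx]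
    change lastValue _ _ _ _ < _
    rw [lastValue_of_mem _ _ hm]
    exact (hf _ (hcol x hx)).lt x hm
  · exact (nsumRange_spec fun j hj => ⟨(hv x hx j hj).1, (hv x hx j hj).2.2⟩).2
  · refine (nsumRange_le (fun j hj => (hv y hy j hj).1) (fun j hj => (hv x hx j hj).1)
      (fun j hj => (hf j hj).lastValue_antitone hxy.le)).2 ⟨col y, hcol y hy, ?_⟩
    exact (hf _ (hcol y hy)).lastValue_lt hxy (by simp [hy])

theorem exists_isDescent_of_fintype {κ : Type*} [Fintype κ] [DecidableEq κ] {q : ℕ → ℕ}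
    {δ : ONote} {X : Finset ℕ} (hq : Monotone q)
    (hδ : NF δ) (hX : ∀ x ∈ X, maxCoeff (oadd δ 1 0) ≤ q x) {c : ℕ} (col : ℕ → κ)
    (hc : Fintype.card κ ≤ c + 1)
    (h : ∀ j, ∃ f, IsDescent q (oadd δ 1 0) (X.filter (col · = j)) f) :
    ∃ f, IsDescent (fun x => (c + 1) * q x) (oadd δ c.succPNat 0) X f := by
  let e := Fintype.equivFin κ
  refine exists_isDescent_of_classes hq hδ hX c (fun x => e (col x))
    (fun x _ => (e (col x)).2.trans_le hc) fun j hj => ?_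
  by_cases hj' : j < Fintype.card κ
  · obtain ⟨f, hf⟩ := h (e.symm ⟨j, hj'⟩)
    refine ⟨f, hf.mono (fun x hx => ?_) le_rfl fun _ _ => le_rfl⟩
    simp only [Finset.mem_filter] at hx ⊢
    refine ⟨hx.1, ?_⟩
    rw [Equiv.eq_symm_apply]
    exact Fin.ext hx.2
  · refine ⟨fun _ => 0, ?_⟩
    have : X.filter (fun x => (e (col x) : ℕ) = j) = ∅ := by
      ext x
      simp only [Finset.mem_filter, Finset.notMem_empty, iff_false, not_and]
      rintro - rfl
      exact hj' (e (col x)).2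
    rw [this]
    constructor <;> simp

end ONote

open ONote

/-- On `Y`, the value of `F` at a set with `n + 1` elements does not depend on its last element. -/
def EndHom (n : ℕ) (F : Finset ℕ → ℕ) (Y : Finset ℕ) : Prop :=
  ∀ s ⊆ Y, s.card = n → ∀ x ∈ Y, ∀ x' ∈ Y, (∀ y ∈ s, y < x) → (∀ y ∈ s, y < x') →
    F (insert x s) = F (insert x' s)

/-- On `Y`, the value of `F` at a set with `n` elements depends only on its least element. -/
def MinHom (n : ℕ) (F : Finset ℕ → ℕ) (Y : Finset ℕ) : Prop :=
  ∀ s ⊆ Y, ∀ s' ⊆ Y, s.card = n → s'.card = n → s.min = s'.min → F s = F s'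

/-- The colours of sets with least element `x` are smaller than `h x`. -/
def MinBounded (h : ℕ → ℕ) (F : Finset ℕ → ℕ) : Prop :=
  ∀ s, ∀ x ∈ s, (∀ y ∈ s, x ≤ y) → F s < h x

/-- The growth needed to make a set end-homogeneous. -/
def endHomBound (h g : ℕ → ℕ) (x : ℕ) : ℕ := g x + h x ^ 2 ^ (x + 1) + 1

theorem MinBounded.pos {h : ℕ → ℕ} {F : Finset ℕ → ℕ} (hF : MinBounded h F) (x : ℕ) : 0 < h x :=
  (Nat.zero_le _).trans_lt (hF {x} x (by simp) (by simp))

theorem endHomBound_mono {h g : ℕ → ℕ} (hh : Monotone h) (hg : Monotone g) (h0 : ∀ x, 0 < h x) :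
    Monotone (endHomBound h g) := fun x y hxy => by
  have h1 : h x ^ 2 ^ (x + 1) ≤ h y ^ 2 ^ (y + 1) :=
    (Nat.pow_le_pow_left (hh hxy) _).trans
      (Nat.pow_le_pow_right (h0 y) (Nat.pow_le_pow_right two_pos (by omega)))
  have := hg hxy
  unfold endHomBound
  omega

/-- One step in the construction of an end-homogeneous set. -/
theorem exists_large_class {F : Finset ℕ → ℕ} {h g : ℕ → ℕ} (hh : Monotone h)
    (hg : Monotone g) (hF : MinBounded h F) {α β : ONote} (hβ : NF β) (hβα : β < α)
    {P X : Finset ℕ} {y : ℕ} (hy : y ∈ X) (hyX : ∀ x ∈ X, y ≤ x) (hPX : ∀ p ∈ P, p < y)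
    (hβg : maxCoeff β ≤ g y)
    (hX : IsLarge (fun x => endHomBound h g x ^ (x + 1 - P.card)) (oadd α 1 0) X) :
    ∃ Z ⊆ X.erase y,
      IsLarge (fun x => endHomBound h g x ^ (x + 1 - (insert y P).card)) (oadd β 1 0) Z ∧
      ∀ s ⊆ insert y P, y ∈ s → ∀ x ∈ Z, ∀ x' ∈ Z, F (insert x s) = F (insert x' s) := by
  classical
  set G := endHomBound h g with hG
  have hGm : Monotone G := endHomBound_mono hh hg hF.pos
  have hG1 : ∀ x, 1 ≤ G x := fun x => by rw [hG]; unfold endHomBound; omega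
  have hPr : insert y P ⊆ Finset.range (y + 1) := by
    intro p hp
    rcases Finset.mem_insert.1 hp with rfl | hp
    · simp
    · have := hPX p hp; simp; omega
  have hyP : y ∉ P := fun h => lt_irrefl _ (hPX y h)
  have hPc : P.card ≤ y := by
    have := Finset.card_le_card hPr
    rw [Finset.card_insert_of_notMem hyP, Finset.card_range] at this
    omega
  have hbd : ∀ s ⊆ insert y P, y ∈ s → ∀ x ∈ X, F (insert x s) < h y := by
    intro s hs hys x hx
    have hne : (insert x s).Nonempty := ⟨x, by simp⟩
    have hmin := Finset.min'_mem _ hne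
    refine (hF _ _ hmin fun z hz => Finset.min'_le _ _ hz).trans_le (hh ?_)
    exact Finset.min'_le _ _ (by simp [hys])
  let col : ℕ → ((insert y P).powerset → Fin (h y)) := fun x s =>
    if hs : y ∈ s.1 ∧ x ∈ X then
      ⟨F (insert x s.1), hbd _ (Finset.mem_powerset.1 s.2) hs.1 x hs.2⟩
    else ⟨0, hF.pos y⟩
  by_contra hcon
  push Not at hcon
  have hbad : ∀ j, ∃ f, IsDescent (fun x => G x ^ (x - P.card)) (oadd β 1 0)
      ((X.erase y).filter (col · = j)) f := by
    intro j
    by_contra hl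
    have hl' : IsLarge (fun x => G x ^ (x + 1 - (insert y P).card)) (oadd β 1 0)
        ((X.erase y).filter (col · = j)) := by
      rw [Finset.card_insert_of_notMem hyP]
      simp only [Nat.add_sub_add_right]
      exact hl
    obtain ⟨s, hs, hys, x, hx, x', hx', hne⟩ := hcon _ (Finset.filter_subset _ _) hl'
    simp only [Finset.mem_filter, Finset.mem_erase] at hx hx'
    have := congrFun (hx.2.trans hx'.2.symm) ⟨s, Finset.mem_powerset.2 hs⟩
    simp only [col, hys, hx.1.2, hx'.1.2, and_self, dite_true, Fin.mk.injEq] at this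
    exact hne this
  have hcard : Fintype.card ((insert y P).powerset → Fin (h y)) ≤ (G y - 1) + 1 := by
    rw [Fintype.card_fun, Fintype.card_fin, Fintype.card_coe, Finset.card_powerset,
      Finset.card_insert_of_notMem hyP]
    have : h y ^ 2 ^ (P.card + 1) ≤ h y ^ 2 ^ (y + 1) :=
      Nat.pow_le_pow_right (hF.pos y) (Nat.pow_le_pow_right two_pos (by omega))
    rw [hG]
    unfold endHomBound
    omega
  have hqm : Monotone fun x => G x ^ (x - P.card) := fun x x' hxx => by
    exact (Nat.pow_le_pow_left (hGm hxx) _).trans (Nat.pow_le_pow_right (hG1 _) (by omega))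
  have hXy : ∀ x ∈ X.erase y, y < x := fun x hx => by
    simp only [Finset.mem_erase] at hx
    exact lt_of_le_of_ne (hyX x hx.2) (Ne.symm hx.1)
  have hGy : g y + 1 ≤ G y := by rw [hG]; unfold endHomBound; omega
  obtain ⟨f, hf⟩ := exists_isDescent_of_fintype hqm hβ (X := X.erase y) (fun x hx => by
    have hyx := hXy x hx
    have h1 : G x ≤ G x ^ (x - P.card) := by
      conv_lhs => rw [← pow_one (G x)]
      exact Nat.pow_le_pow_right (hG1 x) (by omega)
    have h2 := hGm hyx.le
    simp only [maxCoeff_oadd, maxCoeff_zero, PNat.one_coe]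
    omega) col hcard hbad
  have hPy : ((G y - 1).succPNat : ℕ) = G y := by
    have := hG1 y
    simp; omega
  apply hX
  refine ⟨Function.update f y (oadd β (G y - 1).succPNat 0), ?_⟩
  have hmem : ∀ x ∈ X, x = y ∨ x ∈ X.erase y ∧ x ≠ y := fun x hx => by
    by_cases h : x = y
    · exact .inl h
    · exact .inr ⟨by simp [h, hx], h⟩
  refine ⟨fun x hx => ?_, fun x hx => ?_, fun x hx => ?_, fun x hx x' hx' hxx => ?_⟩
  · rcases hmem x hx with rfl | ⟨hx, hne⟩
    · simpa using hβ.oadd_zero _ _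
    · simpa [hne] using hf.nf x hx
  · have : oadd β (G y - 1).succPNat 0 < oadd α 1 0 := oadd_lt_oadd_1 (hβ.oadd_zero _ _) hβα
    rcases hmem x hx with rfl | ⟨hx, hne⟩
    · simpa using this
    · simpa [hne] using (hf.lt x hx).trans this
  · rcases hmem x hx with rfl | ⟨hx, hne⟩
    · rw [Function.update_self]
      have h1 : G x ≤ G x ^ (x + 1 - P.card) := by
        conv_lhs => rw [← pow_one (G x)]
        exact Nat.pow_le_pow_right (hG1 x) (by omega)
      simp only [maxCoeff_oadd, maxCoeff_zero, hPy]
      omega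
    · rw [Function.update_of_ne hne]
      refine (hf.coeff x hx).trans ?_
      have hyx := hXy x hx
      have h3 : x + 1 - P.card = (x - P.card) + 1 := by omega
      have h4 : G y - 1 + 1 = G y := by have := hG1 y; omega
      rw [h3, pow_succ, mul_comm, h4]
      exact Nat.mul_le_mul_left _ (hGm hyx.le)
  · rcases hmem x hx with rfl | ⟨hx, hne⟩
    · rw [Function.update_self, Function.update_of_ne hxx.ne']
      exact hf.lt x' (by simp [hxx.ne', hx'])
    · have hyx := hXy x hx
      rw [Function.update_of_ne hne, Function.update_of_ne (hyx.trans hxx).ne']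
      exact hf.anti x hx x' (by simp [(hyx.trans hxx).ne', hx']) hxx

theorem exists_endHom_of_prefix {n : ℕ} {F : Finset ℕ → ℕ} {h g : ℕ → ℕ} (hh : Monotone h)
    (hg : Monotone g) (hF : MinBounded h F) {α : ONote} (hα : NF α) (P X : Finset ℕ)
    (hPX : ∀ p ∈ P, ∀ x ∈ X, p < x)
    (hinv : ∀ s ⊆ P, s.card = n → ∀ x ∈ P ∪ X, ∀ x' ∈ P ∪ X, (∀ y ∈ s, y < x) →
      (∀ y ∈ s, y < x') → F (insert x s) = F (insert x' s))
    (hX : IsLarge (fun x => endHomBound h g x ^ (x + 1 - P.card)) (oadd α 1 0) X) :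
    ∃ Y ⊆ X, EndHom n F (P ∪ Y) ∧ IsLarge g α Y := by
  classical
  induction α using (inferInstance : WellFoundedRelation ONote).wf.induction generalizing P X with
  | h α ih =>
  have hne : X.Nonempty := by
    by_contra hX0
    rw [Finset.not_nonempty_iff_eq_empty] at hX0
    subst hX0
    exact hX ⟨fun _ => 0, by constructor <;> simp⟩
  set y := X.min' hne with hy
  have hyX : y ∈ X := Finset.min'_mem _ _
  have hymin : ∀ x ∈ X, y ≤ x := fun x hx => Finset.min'_le _ _ hx
  by_cases h0 : α = 0
  · subst h0
    refine ⟨{y}, by simpa using hyX, ?_, fun ⟨f, hf⟩ =>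
      not_lt_zero_note _ (hf.lt y (by simp))⟩
    intro s hs hsn x hx x' hx' hsx hsx'
    have hsub : P ∪ {y} ⊆ P ∪ X := Finset.union_subset_union_right (by simpa using hyX)
    refine hinv s (fun z hz => ?_) hsn x (hsub hx) x' (hsub hx') hsx hsx'
    rcases Finset.mem_union.1 (hs hz) with h1 | h1
    · exact h1
    · obtain rfl := Finset.mem_singleton.1 h1
      have := hsx _ hz
      rcases Finset.mem_union.1 hx with h2 | h2
      · exact absurd (hPX x h2 _ hyX) (not_lt.2 this.le)
      · exact absurd this (by rw [Finset.mem_singleton.1 h2]; exact lt_irrefl _)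
  · obtain ⟨β, hβ, hβα, hβg, hβmax⟩ := hα.exists_greatest_below h0 (g y)
    obtain ⟨Z, hZX, hZ, hZF⟩ := exists_large_class hh hg hF hβ hβα hyX hymin
      (fun p hp => hPX p hp y hyX) hβg hX
    have hZy : ∀ x ∈ Z, y < x := fun x hx => by
      have := hZX hx
      simp only [Finset.mem_erase] at this
      exact lt_of_le_of_ne (hymin x this.2) (Ne.symm this.1)
    have hZX' : Z ⊆ X := hZX.trans (Finset.erase_subset _ _)
    obtain ⟨Y, hYZ, hYF, hY⟩ := ih β hβα hβ (insert y P) Z (fun p hp x hx => by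
        rcases Finset.mem_insert.1 hp with rfl | hp
        · exact hZy x hx
        · exact hPX p hp x (hZX' hx)) (fun s hs hsn x hx x' hx' hsx hsx' => by
        by_cases hys : y ∈ s
        · have key : ∀ x ∈ insert y P ∪ Z, (∀ y ∈ s, y < x) → x ∈ Z := by
            intro x hx hsx
            have hyx := hsx y hys
            rcases Finset.mem_union.1 hx with h2 | h2
            · rcases Finset.mem_insert.1 h2 with rfl | h2
              · exact absurd hyx (lt_irrefl _)
              · exact absurd (hPX x h2 y hyX) (not_lt.2 hyx.le)
            · exact h2
          exact hZF s hs hys x (key x hx hsx) x' (key x' hx' hsx')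
        · have hsub : insert y P ∪ Z ⊆ P ∪ X := by
            intro z hz
            rcases Finset.mem_union.1 hz with h2 | h2
            · rcases Finset.mem_insert.1 h2 with rfl | h2
              · exact Finset.mem_union_right _ hyX
              · exact Finset.mem_union_left _ h2
            · exact Finset.mem_union_right _ (hZX' h2)
          exact hinv s ((Finset.subset_insert_iff_of_notMem hys).1 hs) hsn x (hsub hx) x'
            (hsub hx') hsx hsx') hZ
    refine ⟨insert y Y, Finset.insert_subset hyX (hYZ.trans hZX'), ?_, ?_⟩
    · rwa [Finset.union_insert, ← Finset.insert_union]
    · rintro ⟨f, hf⟩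
      refine hY ⟨f, fun x hx => hf.nf x (by simp [hx]), fun x hx => ?_,
        fun x hx => hf.coeff x (by simp [hx]), fun x hx x' hx' =>
        hf.anti x (by simp [hx]) x' (by simp [hx'])⟩
      refine (hf.anti y (by simp) x (by simp [hx]) (hZy x (hYZ hx))).trans_le ?_
      exact hβmax _ (hf.nf y (by simp)) (hf.lt y (by simp)) (hf.coeff y (by simp))

theorem exists_endHom {n : ℕ} (hn : n ≠ 0) {F : Finset ℕ → ℕ} {h g : ℕ → ℕ} (hh : Monotone h)
    (hg : Monotone g) (hF : MinBounded h F) {α : ONote} (hα : NF α) {X : Finset ℕ}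
    (hX : IsLarge (fun x => endHomBound h g x ^ (x + 1)) (oadd α 1 0) X) :
    ∃ Y ⊆ X, EndHom n F Y ∧ IsLarge g α Y := by
  obtain ⟨Y, h1, h2, h3⟩ := exists_endHom_of_prefix (n := n) hh hg hF hα ∅ X (by simp)
    (fun s hs hsn => by
      rw [Finset.subset_empty.1 hs] at hsn
      exact absurd hsn.symm hn) (by simpa using hX)
  exact ⟨Y, h1, by simpa using h2, h3⟩

/-- The iterates of `x ↦ x ^ x`. -/
def tower (k x : ℕ) : ℕ := (fun z => z ^ z)^[k] x

theorem tower_succ (k x : ℕ) : tower (k + 1) x = tower k x ^ tower k x :=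
  Function.iterate_succ_apply' _ _ _

theorem two_le_tower (k : ℕ) {x : ℕ} (hx : 2 ≤ x) : 2 ≤ tower k x := by
  induction k with
  | zero => exact hx
  | succ k ih => rw [tower_succ]; exact ih.trans (Nat.le_self_pow (by omega) _)

theorem tower_lt_succ (k : ℕ) {x : ℕ} (hx : 2 ≤ x) : tower k x < tower (k + 1) x := by
  rw [tower_succ]
  have := two_le_tower k hx
  calc tower k x < 2 ^ tower k x := Nat.lt_two_pow_self
    _ ≤ _ := Nat.pow_le_pow_left this _

theorem tower_le {k k' : ℕ} (h : k ≤ k') {x : ℕ} (hx : 2 ≤ x) : tower k x ≤ tower k' x :=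
  monotone_nat_of_le_succ (f := fun k => tower k x) (fun k => (tower_lt_succ k hx).le) h

theorem add_le_tower (k : ℕ) {x : ℕ} (hx : 2 ≤ x) : x + k ≤ tower k x := by
  induction k with
  | zero => exact le_rfl
  | succ k ih => have := tower_lt_succ k hx; omega

theorem tower_mono (k : ℕ) {x y : ℕ} (hx : 2 ≤ x) (h : x ≤ y) : tower k x ≤ tower k y := by
  induction k with
  | zero => exact h
  | succ k ih =>
    rw [tower_succ, tower_succ]
    have := two_le_tower k hx
    exact (Nat.pow_le_pow_left ih _).trans (Nat.pow_le_pow_right (by omega) ih)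

/-- Monotone functions of elementary growth. -/
def IsElem (q : ℕ → ℕ) : Prop := Monotone q ∧ ∃ k, ∀ x, 2 ≤ x → q x ≤ tower k x

namespace IsElem

theorem mono {q : ℕ → ℕ} (h : IsElem q) : Monotone q := h.1

theorem exists_common {q r : ℕ → ℕ} (hq : IsElem q) (hr : IsElem r) :
    ∃ k, ∀ x, 2 ≤ x → q x ≤ tower k x ∧ r x ≤ tower k x := by
  obtain ⟨-, k, hk⟩ := hq
  obtain ⟨-, l, hl⟩ := hr
  exact ⟨max k l, fun x hx => ⟨(hk x hx).trans (tower_le (le_max_left _ _) hx),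
    (hl x hx).trans (tower_le (le_max_right _ _) hx)⟩⟩

theorem const (c : ℕ) : IsElem fun _ => c :=
  ⟨monotone_const, c, fun x hx => (Nat.le_add_left c x).trans (add_le_tower c hx)⟩

theorem id : IsElem fun x => x := ⟨monotone_id, 0, fun _ _ => le_rfl⟩

theorem add {q r : ℕ → ℕ} (hq : IsElem q) (hr : IsElem r) : IsElem fun x => q x + r x := by
  refine ⟨hq.1.add hr.1, ?_⟩
  obtain ⟨k, hk⟩ := hq.exists_common hr
  refine ⟨k + 1, fun x hx => ?_⟩
  obtain ⟨h1, h2⟩ := hk x hx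
  have h3 := two_le_tower k hx
  calc q x + r x ≤ tower k x * 2 := by omega
    _ ≤ tower k x * tower k x := Nat.mul_le_mul_left _ h3
    _ = tower k x ^ 2 := (sq _).symm
    _ ≤ tower (k + 1) x := by rw [tower_succ]; exact Nat.pow_le_pow_right (by omega) h3

theorem pow {q r : ℕ → ℕ} (hq : IsElem q) (hr : IsElem r) (h : ∀ x, 0 < q x) :
    IsElem fun x => q x ^ r x := by
  refine ⟨fun x y hxy => (Nat.pow_le_pow_left (hq.1 hxy) _).trans
    (Nat.pow_le_pow_right (h y) (hr.1 hxy)), ?_⟩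
  obtain ⟨k, hk⟩ := hq.exists_common hr
  refine ⟨k + 1, fun x hx => ?_⟩
  obtain ⟨h1, h2⟩ := hk x hx
  have h3 := two_le_tower k hx
  rw [tower_succ]
  exact (Nat.pow_le_pow_left h1 _).trans (Nat.pow_le_pow_right (by omega) h2)

theorem mul {q r : ℕ → ℕ} (hq : IsElem q) (hr : IsElem r) : IsElem fun x => q x * r x := by
  refine ⟨fun x y hxy => Nat.mul_le_mul (hq.1 hxy) (hr.1 hxy), ?_⟩
  obtain ⟨k, hk⟩ := hq.exists_common hr
  refine ⟨k + 1, fun x hx => ?_⟩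
  obtain ⟨h1, h2⟩ := hk x hx
  have h3 := two_le_tower k hx
  calc q x * r x ≤ tower k x * tower k x := Nat.mul_le_mul h1 h2
    _ = tower k x ^ 2 := (sq _).symm
    _ ≤ tower (k + 1) x := by rw [tower_succ]; exact Nat.pow_le_pow_right (by omega) h3

theorem endHomBound {h g : ℕ → ℕ} (hh : IsElem h) (hg : IsElem g) (h0 : ∀ x, 0 < h x) :
    IsElem fun x => endHomBound h g x ^ (x + 1) :=
  ((hg.add (hh.pow ((const 2).pow (id.add (const 1)) fun _ => two_pos) h0)).add (const 1)).pow
    (id.add (const 1)) fun _ => Nat.succ_pos _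

end IsElem

theorem EndHom.minHom {n : ℕ} {F : Finset ℕ → ℕ} {Y₁ Y : Finset ℕ} (h₁ : EndHom (n + 1) F Y₁)
    (hY : Y ⊆ Y₁)
    (h : MinHom (n + 1) (fun s => if s ⊆ Y₁ then F (insert (Y₁.sup id) s) else 0) Y) :
    MinHom (n + 2) F Y := by
  have key : ∀ s ⊆ Y, s.card = n + 2 → ∃ t ⊆ Y, t.card = n + 1 ∧ t.min = s.min ∧
      F s = F (insert (Y₁.sup id) t) := by
    intro s hs hsn
    have hne : s.Nonempty := Finset.card_pos.1 (by omega)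
    have hM := Finset.max'_mem _ hne
    have hlt : ∀ y ∈ s.erase (s.max' hne), y < s.max' hne := fun y hy =>
      Finset.lt_max'_of_mem_erase_max' _ hne hy
    have hcard : (s.erase (s.max' hne)).card = n + 1 := by
      rw [Finset.card_erase_of_mem hM, hsn]; rfl
    have hmaxle : s.max' hne ≤ Y₁.sup id := Finset.le_sup (f := id) (hY (hs hM))
    have hY1 : Y₁.Nonempty := ⟨_, hY (hs hM)⟩
    refine ⟨s.erase (s.max' hne), (Finset.erase_subset _ _).trans hs, hcard, ?_, ?_⟩
    · apply le_antisymm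
      · refine Finset.le_min fun y hy => ?_
        by_cases hyM : y = s.max' hne
        · obtain ⟨z, hz⟩ := Finset.card_pos.1 (show 0 < (s.erase (s.max' hne)).card by omega)
          rw [hyM]
          exact (Finset.min_le hz).trans (WithTop.coe_le_coe.2 (hlt z hz).le)
        · exact Finset.min_le (by simp [hyM, hy])
      · exact Finset.min_mono (Finset.erase_subset _ _)
    · conv_lhs => rw [← Finset.insert_erase hM]
      refine h₁ _ ((Finset.erase_subset _ _).trans (hs.trans hY)) hcard _ (hY (hs hM)) _ ?_ hlt
        fun y hy => (hlt y hy).trans_le hmaxle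
      obtain ⟨z, hz, hz'⟩ := Finset.exists_mem_eq_sup Y₁ hY1 id
      rw [hz']
      exact hz
  intro s hs s' hs' hn hn' hmin
  obtain ⟨t, ht, htn, htm, e⟩ := key s hs hn
  obtain ⟨t', ht', htn', htm', e'⟩ := key s' hs' hn'
  have := h t ht t' ht' htn htn' (htm.trans (hmin.trans htm'.symm))
  simp only [ht.trans hY, ht'.trans hY, if_true] at this
  rw [e, e', this]

theorem exists_minHom_isLarge (n : ℕ) {h g : ℕ → ℕ} (hh : IsElem h) (h0 : ∀ x, 0 < h x)
    (hg : IsElem g) {α : ONote} (hα : NF α) :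
    ∃ β, NF β ∧ ∃ q, IsElem q ∧ ∀ F, MinBounded h F → ∀ X, IsLarge q β X →
      ∃ Y ⊆ X, MinHom (n + 1) F Y ∧ IsLarge g α Y := by
  induction n with
  | zero =>
    refine ⟨α, hα, g, hg, fun F _ X hX => ⟨X, subset_rfl, ?_, hX⟩⟩
    intro s _ s' _ hn hn' hmin
    obtain ⟨x, rfl⟩ := Finset.card_eq_one.1 hn
    obtain ⟨y, rfl⟩ := Finset.card_eq_one.1 hn'
    simp only [Finset.min_singleton, WithTop.coe_inj] at hmin
    rw [hmin]
  | succ n ih =>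
    obtain ⟨β, hβ, q, hq, H⟩ := ih
    refine ⟨oadd β 1 0, hβ.oadd_zero _ _, _, hh.endHomBound hq h0, fun F hF X hX => ?_⟩
    obtain ⟨Y₁, hY₁, hE, hL⟩ := exists_endHom n.succ_ne_zero hh.mono hq.mono hF hβ hX
    obtain ⟨Y, hY, hM, hL'⟩ := H (fun s => if s ⊆ Y₁ then F (insert (Y₁.sup id) s) else 0)
      (fun s x hx hmin => by
        dsimp only
        split_ifs with hs
        · refine hF _ x (by simp [hx]) fun y hy => ?_
          rcases Finset.mem_insert.1 hy with rfl | hy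
          · exact Finset.le_sup (f := id) (hs hx)
          · exact hmin y hy
        · exact h0 x) Y₁ hL
    exact ⟨Y, hY.trans hY₁, hE.minHom hY hM, hL'⟩

theorem ONote.IsLarge.lt_card {k : ℕ} {X : Finset ℕ}
    (h : IsLarge (fun _ => k + 1) (ONote.ofNat (k + 1)) X) : k < X.card := by
  by_contra hk
  apply h
  have hc : ∀ c ≤ k + 1, maxCoeff (ONote.ofNat c) ≤ k + 1 := by
    intro c hc
    cases c with
    | zero => simp
    | succ c => simpa using hc
  have hlt : ∀ a b : ℕ, a < b → ONote.ofNat a < ONote.ofNat b := by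
    intro a b hab
    rw [lt_def, repr_ofNat, repr_ofNat]
    exact_mod_cast hab
  have hsub : ∀ x ∈ X, (X.filter (x < ·)).card < k + 1 := fun x hx => by
    have := Finset.card_le_card (Finset.filter_subset (x < ·) X)
    omega
  refine ⟨fun x => ONote.ofNat (X.filter (x < ·)).card, fun x hx => inferInstance,
    fun x hx => hlt _ _ (hsub x hx), fun x hx => hc _ (hsub x hx).le, fun x hx y hy hxy => ?_⟩
  refine hlt _ _ (Finset.card_lt_card ?_)
  rw [Finset.ssubset_iff_of_subset]
  · exact ⟨y, by simp [hy, hxy], by simp⟩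
  · intro z
    simp only [Finset.mem_filter]
    exact fun hz => ⟨hz.1, hxy.trans hz.2⟩

theorem exists_minHom (n k : ℕ) {h : ℕ → ℕ} (hh : IsElem h) (h0 : ∀ x, 0 < h x) :
    ∃ β, NF β ∧ ∃ q, IsElem q ∧ ∀ F, MinBounded h F → ∀ X, IsLarge q β X →
      ∃ Y ⊆ X, MinHom (n + 1) F Y ∧ k < Y.card := by
  obtain ⟨β, hβ, q, hq, H⟩ := exists_minHom_isLarge n hh h0 (IsElem.const (k + 1))
    (α := ONote.ofNat (k + 1)) inferInstance
  refine ⟨β, hβ, q, hq, fun F hF X hX => ?_⟩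
  obtain ⟨Y, hY, hM, hL⟩ := H F hF X hX
  exact ⟨Y, hY, hM, hL.lt_card⟩

theorem HardyRel.le {a : ONote} {x y : ℕ} (h : HardyRel a x y) : x ≤ y := by
  induction h with
  | zero => exact le_rfl
  | succ _ _ ih => omega
  | limit _ _ _ ih => exact ih

theorem HardyRel.of_isSucc {a : ONote} {x y : ℕ} (h : HardyRel a x y) (ha : a.isSucc) :
    HardyRel (a.fseq x) (x + 1) y := by
  cases h with
  | zero => exact absurd ha (by simp [isSucc])
  | succ _ h => exact h
  | limit _ h _ => exact absurd ha h

theorem HardyRel.of_not_isSucc {a : ONote} {x y : ℕ} (h : HardyRel a x y) (h0 : a ≠ 0)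
    (ha : ¬ a.isSucc) : HardyRel (a.fseq x) x y := by
  cases h with
  | zero => exact absurd rfl h0
  | succ h _ => exact absurd h ha
  | limit _ _ h => exact h

theorem exists_hardyRel {a : ONote} (ha : NF a) (x : ℕ) : ∃ y, HardyRel a x y := by
  induction a using (inferInstance : WellFoundedRelation ONote).wf.induction generalizing x with
  | h a ih =>
    by_cases h0 : a = 0
    · subst h0; exact ⟨x, HardyRel.zero x⟩
    · obtain ⟨h1, h2⟩ := ha.fseq_spec x
      by_cases hs : a.isSucc
      · obtain ⟨y, hy⟩ := ih _ (h2 h0) h1 (x + 1)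
        exact ⟨y, .succ hs hy⟩
      · obtain ⟨y, hy⟩ := ih _ (h2 h0) h1 x
        exact ⟨y, .limit h0 hs hy⟩

theorem hardyRel_hardy {a : ONote} (ha : NF a) (x : ℕ) : HardyRel a x (hardy a x) := by
  have h := exists_hardyRel ha x
  rw [hardy, dif_pos h]
  exact h.choose_spec

/-- A Hardy computation passes through every smaller notation with small coefficients. -/
theorem HardyRel.exists_of_lt {a b : ONote} {y m : ℕ} (h : HardyRel a y m) (ha : NF a) (hb : NF b)
    (hlt : b < a) (hy : maxCoeff b < y) : ∃ z, y ≤ z ∧ HardyRel b z m := by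
  induction h with
  | zero => exact absurd hlt (not_lt_zero_note _)
  | @succ a y m hs h ih =>
    have hle := (ha.le_fseq hb hlt hy).1
    by_cases hbe : b = a.fseq y
    · rw [hbe]; exact ⟨y + 1, by omega, h⟩
    · have hf := (ha.fseq_spec y).1
      obtain ⟨z, hz, hr⟩ := ih hf (hb.lt_of_le_of_ne hf hle hbe) (by omega)
      exact ⟨z, by omega, hr⟩
  | @limit a y m h0 hs h ih =>
    exact ih (ha.fseq_spec y).1 ((ha.le_fseq hb hlt hy).2 hs) hy

namespace ONote

/-- Append the terms of a notation to those of another one. -/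
def append : ONote → ONote → ONote
  | zero, t => t
  | oadd e n a, t => oadd e n (append a t)

@[simp] theorem oadd_append (e : ONote) (n : ℕ+) (a t : ONote) :
    append (oadd e n a) t = oadd e n (append a t) := rfl

@[simp] theorem append_zero (a : ONote) : append a 0 = a := by
  induction a with
  | zero => rfl
  | oadd e n a _ ih => rw [oadd_append, ih]

theorem append_assoc (a b c : ONote) : append (append a b) c = append a (append b c) := by
  induction a with
  | zero => rfl
  | oadd e n a _ ih => rw [oadd_append, oadd_append, oadd_append, ih]

theorem append_ne_zero (a : ONote) {t : ONote} (ht : t ≠ 0) : append a t ≠ 0 := by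
  cases a with
  | zero => exact ht
  | oadd e n a => exact fun h => ONote.noConfusion h

theorem isSucc_append (a : ONote) {t : ONote} (ht : t ≠ 0) : isSucc (append a t) ↔ isSucc t := by
  induction a with
  | zero => rfl
  | oadd e n a _ ih => rw [oadd_append, isSucc_oadd_of_ne_zero _ _ (append_ne_zero a ht), ih]

theorem fseq_append (a : ONote) {t : ONote} (ht : t ≠ 0) (x : ℕ) :
    fseq (append a t) x = append a (fseq t x) := by
  induction a with
  | zero => rfl
  | oadd e n a _ ih => rw [oadd_append, fseq_oadd_of_ne_zero_s16 _ _ (append_ne_zero a ht), ih]; rfl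

theorem oadd_ne_zero (e : ONote) (n : ℕ+) (a : ONote) : oadd e n a ≠ 0 :=
  fun h => ONote.noConfusion h

theorem isSucc_ofNat_succ (c : ℕ) : isSucc (ofNat (c + 1)) := rfl

theorem fseq_ofNat_succ (c x : ℕ) : fseq (ofNat (c + 1)) x = ofNat c := by
  cases c with
  | zero => exact fseq_zero_one x
  | succ c =>
    change fseq (oadd 0 (c + 1).succPNat 0) x = _
    rw [fseq_oadd_zero_zero (by intro h; simpa using congrArg PNat.val h)]
    change _ = oadd 0 c.succPNat 0
    congr 1

theorem replaceLast_one (e t : ONote) : replaceLast e 1 t = t := by simp [replaceLast]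

theorem replaceLast_add_one (e t : ONote) (i : ℕ+) :
    replaceLast e (i + 1) t = append (oadd e i 0) t := by
  rw [replaceLast, if_neg (by intro h; simpa using congrArg PNat.val h)]
  have : i + 1 - 1 = i := PNat.coe_injective (by
    rw [PNat.sub_coe, if_pos (by exact PNat.lt_add_left 1 i)]; simp)
  rw [this]; rfl

end ONote

/-- The fast growing hierarchy at finite levels. -/
def finiteGrowth : ℕ → ℕ → ℕ
  | 0, y => y + 1
  | j + 1, y => (finiteGrowth j)^[y] y

theorem le_finiteGrowth (j y : ℕ) : y ≤ finiteGrowth j y := by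
  induction j generalizing y with
  | zero => exact Nat.le_succ y
  | succ j ih =>
    rw [finiteGrowth]
    exact Function.id_le_iterate_of_id_le (f := finiteGrowth j) ih y y

theorem finiteGrowth_mono (j : ℕ) : Monotone (finiteGrowth j) := by
  induction j with
  | zero => exact fun _ _ h => Nat.succ_le_succ h
  | succ j ih =>
    intro x y hxy
    rw [finiteGrowth, finiteGrowth]
    exact (ih.iterate x hxy).trans
      (Function.monotone_iterate_of_id_le (f := finiteGrowth j) (le_finiteGrowth j) hxy y)

theorem finiteGrowth_one (y : ℕ) : finiteGrowth 1 y = 2 * y := by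
  have : ∀ k, (finiteGrowth 0)^[k] y = y + k := fun k => by
    induction k with
    | zero => rfl
    | succ k ih => rw [Function.iterate_succ_apply', ih]; rfl
  rw [finiteGrowth, this]; omega

theorem finiteGrowth_two (y : ℕ) : finiteGrowth 2 y = 2 ^ y * y := by
  have : ∀ k, (finiteGrowth 1)^[k] y = 2 ^ k * y := fun k => by
    induction k with
    | zero => simp
    | succ k ih => rw [Function.iterate_succ_apply', ih, finiteGrowth_one, pow_succ]; ring
  rw [finiteGrowth, this]

theorem pow_self_le_finiteGrowth_two {y : ℕ} (hy : 1 ≤ y) :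
    y ^ y ≤ finiteGrowth 2 (finiteGrowth 2 y) := by
  rw [finiteGrowth_two, finiteGrowth_two y]
  calc y ^ y ≤ (2 ^ y) ^ y := Nat.pow_le_pow_left Nat.lt_two_pow_self.le y
    _ = 2 ^ (y * y) := (pow_mul 2 y y).symm
    _ ≤ 2 ^ (2 ^ y * y) :=
      Nat.pow_le_pow_right two_pos (Nat.mul_le_mul_right _ Nat.lt_two_pow_self.le)
    _ ≤ _ := Nat.le_mul_of_pos_right _ (by positivity)

theorem tower_le_iterate_finiteGrowth (k : ℕ) {y : ℕ} (hy : 2 ≤ y) :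
    tower k y ≤ (finiteGrowth 2)^[2 * k] y := by
  induction k with
  | zero => exact le_rfl
  | succ k ih =>
    have h2 := two_le_tower k hy
    rw [tower_succ, Nat.mul_succ, Function.iterate_succ_apply', Function.iterate_succ_apply']
    exact (pow_self_le_finiteGrowth_two (by omega)).trans
      (finiteGrowth_mono 2 (finiteGrowth_mono 2 ih))

theorem IsElem.eventually_le {q : ℕ → ℕ} (hq : IsElem q) :
    ∃ N, ∀ y, N ≤ y → q y ≤ finiteGrowth 3 y := by
  obtain ⟨-, k, hk⟩ := hq
  refine ⟨2 * k + 2, fun y hy => (hk y (by omega)).trans ?_⟩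
  refine (tower_le_iterate_finiteGrowth k (by omega)).trans ?_
  rw [finiteGrowth]
  exact Function.monotone_iterate_of_id_le (f := finiteGrowth 2) (le_finiteGrowth 2)
    (show 2 * k ≤ y by omega) y

theorem IsElem.comp_succ {q : ℕ → ℕ} (hq : IsElem q) : IsElem fun x => q (x + 1) := by
  refine ⟨fun x y h => hq.1 (Nat.succ_le_succ h), ?_⟩
  obtain ⟨-, k, hk⟩ := hq
  refine ⟨k + 1, fun x hx => (hk _ (by omega)).trans ?_⟩
  rw [tower, tower, Function.iterate_succ_apply]
  exact tower_mono k (by omega) (tower_lt_succ 0 hx)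

theorem HardyRel.exists_of_append (c : ℕ) {A : ONote} {i : ℕ+} {y m : ℕ}
    (h : HardyRel (append A (oadd (ofNat c) i 0)) y m) :
    ∃ z, (finiteGrowth c)^[i] y ≤ z ∧ HardyRel A z m := by
  induction c generalizing A i y with
  | zero =>
    induction i generalizing y with
    | one =>
      have := h.of_isSucc ((isSucc_append A (oadd_ne_zero _ _ _)).2 rfl)
      rw [fseq_append A (oadd_ne_zero _ _ _)] at this
      refine ⟨y + 1, le_rfl, ?_⟩
      change HardyRel (append A (fseq (oadd 0 1 0) y)) _ _ at this
      rwa [fseq_zero_one, append_zero] at this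
    | succ i ih =>
      have := h.of_isSucc ((isSucc_append A (oadd_ne_zero _ _ _)).2 rfl)
      rw [fseq_append A (oadd_ne_zero _ _ _)] at this
      have e : fseq (oadd (ofNat 0) (i + 1) 0) y = oadd (ofNat 0) i 0 := by
        change fseq (oadd 0 (i + 1) 0) y = _
        rw [fseq_oadd_zero_zero (by intro h; simpa using congrArg PNat.val h)]
        congr 1
        exact PNat.coe_injective (by
          rw [PNat.sub_coe, if_pos (by exact PNat.lt_add_left 1 i)]; simp)
      rw [e] at this
      obtain ⟨z, hz, hr⟩ := ih this
      exact ⟨z, hz, hr⟩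
  | succ c ihc =>
    have h0 : ofNat (c + 1) ≠ 0 := oadd_ne_zero _ _ _
    have key : ∀ {A : ONote} {y : ℕ}, HardyRel (append A (fseqOpow (ofNat (c + 1)) y)) y m →
        ∃ z, finiteGrowth (c + 1) y ≤ z ∧ HardyRel A z m := by
      intro A y h
      cases y with
      | zero =>
        simp only [fseqOpow, isSucc_ofNat_succ, if_true, append_zero] at h
        exact ⟨0, le_rfl, h⟩
      | succ y =>
        simp only [fseqOpow, isSucc_ofNat_succ, if_true, fseq_ofNat_succ] at h
        exact ihc h
    have step : ∀ {i : ℕ+} {y : ℕ}, HardyRel (append A (oadd (ofNat (c + 1)) i 0)) y m →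
        HardyRel (append A (replaceLast (ofNat (c + 1)) i (fseqOpow (ofNat (c + 1)) y))) y m := by
      intro i y h
      rw [← fseq_oadd_zero h0, ← fseq_append A (oadd_ne_zero _ _ _)]
      refine h.of_not_isSucc (append_ne_zero A (oadd_ne_zero _ _ _)) fun hs => ?_
      exact h0 ((isSucc_append A (oadd_ne_zero _ _ _)).1 hs)
    induction i generalizing y with
    | one =>
      have := step h
      rw [replaceLast_one] at this
      exact key this
    | succ i ih =>
      have := step h
      rw [replaceLast_add_one, ← append_assoc] at this
      obtain ⟨z, hz, hr⟩ := key this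
      obtain ⟨w, hw, hr'⟩ := ih hr
      refine ⟨w, le_trans ?_ hw, hr'⟩
      rw [PNat.add_coe, PNat.one_coe, Function.iterate_succ_apply]
      exact (finiteGrowth_mono (c + 1)).iterate i hz

namespace ONote

/-- Raise all exponents by `4` (in the sense of the natural sum) and append `t`. -/
def shift (t : ONote) : ONote → ONote
  | zero => t
  | oadd e n a => oadd (nsum e (ofNat 4)) n (shift t a)

@[simp] theorem shift_oadd (t e : ONote) (n : ℕ+) (a : ONote) :
    shift t (oadd e n a) = oadd (nsum e (ofNat 4)) n (shift t a) := rfl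

theorem shift_eq_append (t a : ONote) : shift t a = append (shift 0 a) t := by
  induction a with
  | zero => rfl
  | oadd e n a _ ih => rw [shift_oadd, shift_oadd, oadd_append, ih]

theorem NF.ofNat_four_le_nsum {e : ONote} (he : NF e) :
    ONote.ofNat 4 ≤ ONote.nsum e (ONote.ofNat 4) := by
  have := nsum_le_nsum NF.zero he (inferInstance : NF (ONote.ofNat 4)) inferInstance
    (zero_le_note e) le_rfl
  rwa [zero_nsum] at this

theorem NF.nsum_four {e : ONote} (he : NF e) : NF (ONote.nsum e (ONote.ofNat 4)) :=
  he.nsum inferInstance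

theorem opow_le_opow {d e : ONote} (hd : NF d) (he : NF e) (h : d ≤ e) :
    oadd d 1 0 ≤ oadd e 1 0 := by
  by_cases hde : d = e
  · rw [hde]
  · exact le_of_lt (oadd_lt_oadd_1 (hd.oadd_zero _ _) (hd.lt_of_le_of_ne he h hde))

variable {t : ONote}

theorem shift_spec (ht : NF t) (ht4 : t < oadd (ofNat 4) 1 0) {a : ONote} (ha : NF a) :
    NF (shift t a) ∧
      ∀ e, NF e → a < oadd e 1 0 → shift t a < oadd (nsum e (ofNat 4)) 1 0 := by
  induction a with
  | zero =>
    refine ⟨ht, fun e he _ => ht4.trans_le ?_⟩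
    exact opow_le_opow inferInstance he.nsum_four he.ofNat_four_le_nsum
  | oadd d n a _ ih =>
    obtain ⟨h1, h2⟩ := ih ha.snd
    have hnf : NF (shift t (oadd d n a)) :=
      ha.fst.nsum_four.oadd_of_lt h1 (h2 d ha.fst ha.snd_lt)
    refine ⟨hnf, fun e he hlt => ?_⟩
    rw [oadd_lt_opow_iff ha he] at hlt
    rw [shift_oadd] at hnf ⊢
    rw [oadd_lt_opow_iff hnf he.nsum_four]
    exact nsum_lt_nsum_left ha.fst he inferInstance hlt

theorem nf_shift (ht : NF t) (ht4 : t < oadd (ofNat 4) 1 0) {a : ONote} (ha : NF a) :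
    NF (shift t a) := (shift_spec ht ht4 ha).1

theorem shift_lt_shift_zero (ht : NF t) (ht4 : t < oadd (ofNat 4) 1 0) {a b : ONote} (ha : NF a)
    (hb : NF b) (h : a < b) : shift t a < shift 0 b := by
  induction a generalizing b with
  | zero =>
    cases b with
    | zero => exact absurd h (lt_irrefl _)
    | oadd e n b =>
      refine ht4.trans_le ((opow_le_opow inferInstance hb.fst.nsum_four
        hb.fst.ofNat_four_le_nsum).trans ?_)
      rw [shift_oadd, le_def]
      simpa using omega0_le_oadd (nsum e (ofNat 4)) n (shift 0 b)
  | oadd d k a _ ih =>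
    cases b with
    | zero => exact absurd h (not_lt_zero_note _)
    | oadd e n b =>
      have hnf := nf_shift ht ht4 ha
      rw [shift_oadd] at hnf ⊢
      rw [oadd_lt_oadd_iff ha hb] at h
      rcases h with h | ⟨rfl, h | ⟨rfl, h⟩⟩
      · exact oadd_lt_oadd_1 hnf (nsum_lt_nsum_left ha.fst hb.fst inferInstance h)
      · exact oadd_lt_oadd_2 hnf h
      · exact oadd_lt_oadd_3 (ih ha.snd hb.snd h)

theorem maxCoeff_shift_le {a : ONote} (ha : NF a) :
    maxCoeff (shift t a) ≤ max (maxCoeff a + 4) (maxCoeff t) := by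
  induction a with
  | zero => exact le_max_right _ _
  | oadd d k a _ ih =>
    have h1 := ih ha.snd
    have h2 := maxCoeff_nsum_le ha.fst (inferInstance : NF (ofNat 4))
    have h3 : maxCoeff (ofNat 4) = 4 := rfl
    simp only [shift_oadd, maxCoeff_oadd]
    omega

end ONote

theorem HardyRel.isLarge_Ico {q : ℕ → ℕ} {N : ℕ} (hq : Monotone q)
    (hN : ∀ y, N ≤ y → q (y + 1) + 5 + (y + 1) ≤ finiteGrowth 3 y) {β : ONote} (hβ : NF β)
    {x y m : ℕ} (hx : x < y) (hNy : N ≤ y) (hqy : q x + 5 ≤ y) (h : HardyRel (shift 0 β) y m) :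
    IsLarge q β (Finset.Ico x m) := by
  induction β using (inferInstance : WellFoundedRelation ONote).wf.induction generalizing x y with
  | h β ih =>
  have hxm := hx.trans_le h.le
  rintro ⟨f, hf⟩
  have hxI : x ∈ Finset.Ico x m := by simp [hxm]
  have h0 : β ≠ 0 := by
    rintro rfl
    exact not_lt_zero_note _ (hf.lt x hxI)
  obtain ⟨β', hβ', hlt, hc, hmax⟩ := hβ.exists_greatest_below h0 (q x)
  have ht : NF (oadd (ofNat 3) 1 0) := inferInstance
  have ht4 : oadd (ofNat 3) 1 0 < oadd (ofNat 4) 1 0 := oadd_lt_oadd_1 ht (by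
    rw [lt_def, repr_ofNat, repr_ofNat]; exact_mod_cast (by norm_num : 3 < 4))
  have h4 : (0 : ONote) < oadd (ofNat 4) 1 0 := oadd_pos _ _ _
  have hmc := maxCoeff_shift_le (t := oadd (ofNat 3) 1 0) hβ'
  have h3 : maxCoeff (oadd (ofNat 3) 1 0) = 3 := rfl
  obtain ⟨z, hyz, hz⟩ := h.exists_of_lt (nf_shift NF.zero h4 hβ) (nf_shift ht ht4 hβ')
    (shift_lt_shift_zero ht ht4 hβ' hβ hlt) (by omega)
  rw [shift_eq_append] at hz
  obtain ⟨w, hzw, hw⟩ := hz.exists_of_append 3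
  change finiteGrowth 3 z ≤ w at hzw
  have h5 := hN z (by omega)
  have h6 : q (x + 1) ≤ q (z + 1) := hq (by omega)
  have hxw : x + 1 < w := by omega
  have hqw : q (x + 1) + 5 ≤ w := by omega
  refine ih β' hlt hβ' hxw (by omega) hqw hw ⟨f, ?_⟩
  have hsub : Finset.Ico (x + 1) m ⊆ Finset.Ico x m := Finset.Ico_subset_Ico_left (by omega)
  refine ⟨fun u hu => hf.nf u (hsub hu), fun u hu => ?_, fun u hu => hf.coeff u (hsub hu),
    fun u hu v hv => hf.anti u (hsub hu) v (hsub hv)⟩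
  have hxu : x < u := by simp at hu; omega
  exact (hf.anti x hxI u (hsub hu) hxu).trans_le
    (hmax _ (hf.nf x hxI) (hf.lt x hxI) (hf.coeff x hxI))

theorem exists_hardy_isLarge {β : ONote} (hβ : NF β) {q : ℕ → ℕ} (hq : IsElem q) :
    ∃ γ, NF γ ∧ ∀ n, IsLarge q β (Finset.Ico n (hardy γ n)) := by
  obtain ⟨N, hN⟩ := ((hq.comp_succ.add (IsElem.const 5)).add
    (IsElem.id.add (IsElem.const 1))).eventually_le
  have ht : NF (oadd (ofNat 3) 1 (oadd (ofNat 0) N.succPNat 0)) :=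
    NF.oadd_of_lt inferInstance (NF.oadd_zero _ _)
      (oadd_lt_oadd_1 (NF.oadd_zero _ _) (oadd_pos _ _ _))
  have ht4 : oadd (ofNat 3) 1 (oadd (ofNat 0) N.succPNat 0) < oadd (ofNat 4) 1 0 :=
    oadd_lt_oadd_1 ht (by
      rw [lt_def, repr_ofNat, repr_ofNat]; exact_mod_cast (by norm_num : 3 < 4))
  refine ⟨_, nf_shift ht ht4 hβ, fun n => ?_⟩
  have h := hardyRel_hardy (nf_shift ht ht4 hβ) n
  set m := hardy (shift (oadd (ofNat 3) 1 (oadd (ofNat 0) N.succPNat 0)) β) n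
  rw [shift_eq_append, show oadd (ofNat 3) 1 (oadd (ofNat 0) N.succPNat 0) =
    append (oadd (ofNat 3) 1 0) (oadd (ofNat 0) N.succPNat 0) from rfl, ← append_assoc] at h
  obtain ⟨z, hz, h⟩ := h.exists_of_append 0
  obtain ⟨w, hw, h⟩ := h.exists_of_append 3
  change finiteGrowth 3 z ≤ w at hw
  have hsucc : ∀ k, (finiteGrowth 0)^[k] n = n + k := fun k => by
    induction k with
    | zero => rfl
    | succ k ih => rw [Function.iterate_succ_apply', ih]; rfl
  rw [hsucc, Nat.succPNat_coe] at hz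
  have h5 := hN z (by omega)
  have h6 : q n ≤ q (z + 1) := hq.mono (by omega)
  exact h.isLarge_Ico hq.mono hN hβ (by omega) (by omega) (by omega)

/-- For each exponent and each elementary bound on the colours there is a Hardy function bounding
the sets on which a colouring has min-homogeneous subsets of a prescribed size. -/
theorem exists_hardy_minHom (n k : ℕ) {h : ℕ → ℕ} (hh : IsElem h) (h0 : ∀ x, 0 < h x) :
    ∃ γ, NF γ ∧ ∀ F, MinBounded h F → ∀ a, ∃ Y ⊆ Finset.Ico a (hardy γ a),
      MinHom (n + 1) F Y ∧ k < Y.card := by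
  obtain ⟨β, hβ, q, hq, H⟩ := exists_minHom n k hh h0
  obtain ⟨γ, hγ, H'⟩ := exists_hardy_isLarge hβ hq
  exact ⟨γ, hγ, fun F hF a => H F hF _ (H' a)⟩

/-- Truth in `ℕ` of a formula whose quantifiers are bounded, from the outermost inwards, by the
successive terms of the sequence `b`. -/
def bEval : ∀ {m : ℕ}, LPA.BoundedFormula Empty m → (ℕ → ℕ) → (Fin m → ℕ) → Prop
  | _, .falsum, _, _ => False
  | _, .equal t₁ t₂, _, v =>
      t₁.realize (Sum.elim (fun e => e.elim) v) = t₂.realize (Sum.elim (fun e => e.elim) v)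
  | _, .rel R ts, _, v =>
      Structure.RelMap R fun i => (ts i).realize (Sum.elim (fun e => e.elim) v)
  | _, .imp φ ψ, b, v => bEval φ b v → bEval ψ b v
  | _, .all φ, b, v => ∀ x < b 0, bEval φ (fun t => b (t + 1)) (Fin.snoc v x)

/-- Quantifier depth. -/
def quantDepth : ∀ {m : ℕ}, LPA.BoundedFormula Empty m → ℕ
  | _, .falsum => 0
  | _, .equal _ _ => 0
  | _, .rel _ _ => 0
  | _, .imp φ ψ => max (quantDepth φ) (quantDepth ψ)
  | _, .all φ => quantDepth φ + 1

theorem bEval_congr {m : ℕ} (φ : LPA.BoundedFormula Empty m) {b b' : ℕ → ℕ}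
    (h : ∀ t < quantDepth φ, b t = b' t) (v : Fin m → ℕ) : bEval φ b v ↔ bEval φ b' v := by
  induction φ generalizing b b' with
  | falsum => rfl
  | equal => rfl
  | rel => rfl
  | imp φ ψ ihφ ihψ =>
    simp only [bEval]
    rw [ihφ fun t ht => h t (lt_max_of_lt_left ht), ihψ fun t ht => h t (lt_max_of_lt_right ht)]
  | all φ ih =>
    simp only [bEval]
    rw [h 0 (Nat.succ_pos _)]
    exact forall₂_congr fun x _ => ih (fun t ht => h (t + 1) (Nat.succ_lt_succ ht)) _

/-- The information about a finite set with least element `x` that is recorded by its colour. -/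
abbrev Pattern (Φ : Finset (Σ m, LPA.BoundedFormula Empty m)) (x : ℕ) : Type :=
  ((Σ φ : Φ, (Fin φ.1.1 → Fin (x + 1))) → Prop) × Fin ((x + 1) ^ (x + 1) + 1)

theorem card_pattern (Φ : Finset (Σ m, LPA.BoundedFormula Empty m)) (x : ℕ) :
    Nat.card (Pattern Φ x) = 2 ^ (∑ φ ∈ Φ, (x + 1) ^ φ.1) * ((x + 1) ^ (x + 1) + 1) := by
  rw [Nat.card_prod, Nat.card_fun, Nat.card_sigma, ← Finset.sum_coe_sort Φ]
  simp

theorem isElem_card_pattern (Φ : Finset (Σ m, LPA.BoundedFormula Empty m)) :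
    IsElem fun x => Nat.card (Pattern Φ x) := by
  simp only [card_pattern]
  have hs : IsElem fun x => x + 1 := IsElem.id.add (IsElem.const 1)
  refine ((IsElem.const 2).pow ?_ fun _ => by norm_num).mul
    ((hs.pow hs fun _ => Nat.succ_pos _).add (IsElem.const 1))
  classical
  induction Φ using Finset.induction_on with
  | empty => simpa using IsElem.const 0
  | insert φ Φ hφ ih =>
    simp only [Finset.sum_insert hφ]
    exact (hs.pow (IsElem.const φ.1) fun _ => Nat.succ_pos _).add ih

/-- The truth values of the formulas in `Φ` at arguments `≤ x` with quantifiers bounded by `b`,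
together with `b 0` truncated at `(x + 1) ^ (x + 1)`. -/
def pattern (Φ : Finset (Σ m, LPA.BoundedFormula Empty m)) (x : ℕ) (b : ℕ → ℕ) : Pattern Φ x :=
  (fun p => bEval p.1.1.2 b fun a => p.2 a,
    ⟨min (b 0) ((x + 1) ^ (x + 1)), Nat.lt_succ_of_le (min_le_right _ _)⟩)

/-- The code of a pattern. -/
noncomputable def patternCode (Φ : Finset (Σ m, LPA.BoundedFormula Empty m)) (x : ℕ)
    (b : ℕ → ℕ) : ℕ :=
  Finite.equivFin (Pattern Φ x) (pattern Φ x b)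

theorem patternCode_lt (Φ : Finset (Σ m, LPA.BoundedFormula Empty m)) (x : ℕ) (b : ℕ → ℕ) :
    patternCode Φ x b < Nat.card (Pattern Φ x) :=
  Fin.is_lt _

theorem pattern_eq_of_patternCode_eq {Φ : Finset (Σ m, LPA.BoundedFormula Empty m)} {x : ℕ}
    {b b' : ℕ → ℕ} (h : patternCode Φ x b = patternCode Φ x b') : pattern Φ x b = pattern Φ x b' :=
  (Finite.equivFin _).injective (Fin.ext h)

/-- The increasing enumeration of a finite set, continued by `0`. -/
noncomputable def enum (s : Finset ℕ) (i : ℕ) : ℕ :=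
  if h : i < s.card then s.orderEmbOfFin rfl ⟨i, h⟩ else 0

theorem enum_mem {s : Finset ℕ} {i : ℕ} (h : i < s.card) : enum s i ∈ s := by
  rw [enum, dif_pos h]
  exact Finset.orderEmbOfFin_mem _ _ _

theorem enum_lt_enum {s : Finset ℕ} {i j : ℕ} (hij : i < j) (h : j < s.card) :
    enum s i < enum s j := by
  rw [enum, enum, dif_pos h, dif_pos (hij.trans h)]
  exact (s.orderEmbOfFin rfl).strictMono hij

theorem enum_zero_eq {s : Finset ℕ} {x : ℕ} (hx : x ∈ s) (hmin : ∀ y ∈ s, x ≤ y) :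
    enum s 0 = x := by
  have h0 : 0 < s.card := Finset.card_pos.2 ⟨x, hx⟩
  refine le_antisymm ?_ (hmin _ (enum_mem h0))
  rw [enum, dif_pos h0, Finset.orderEmbOfFin_zero rfl h0]
  exact Finset.min'_le _ _ hx

theorem card_image_range {f : ℕ → ℕ} {n : ℕ} (hf : StrictMonoOn f (Set.Iio n)) :
    ((Finset.range n).image f).card = n := by
  rw [Finset.card_image_of_injOn (by simpa using hf.injOn), Finset.card_range]

theorem enum_image_range {f : ℕ → ℕ} {n i : ℕ} (hf : StrictMonoOn f (Set.Iio n)) (hi : i < n) :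
    enum ((Finset.range n).image f) i = f i := by
  have hc := card_image_range hf
  set s := (Finset.range n).image f with hs
  have h : (fun i : Fin s.card => f i) = s.orderEmbOfFin rfl := by
    refine Finset.orderEmbOfFin_unique rfl (fun i => ?_) fun i j hij => ?_
    · exact Finset.mem_image_of_mem _ (Finset.mem_range.2 (i.2.trans_eq hc))
    · exact hf (i.2.trans_eq hc) (j.2.trans_eq hc) hij
  rw [enum, dif_pos (hi.trans_eq hc.symm), ← h]

/-- The sequence `x, b 0, b 1, …`. -/
def consSeq (x : ℕ) (b : ℕ → ℕ) : ℕ → ℕ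
  | 0 => x
  | t + 1 => b t

/-- The colouring given by patterns. -/
noncomputable def patternColor (Φ : Finset (Σ m, LPA.BoundedFormula Empty m)) (s : Finset ℕ) : ℕ :=
  patternCode Φ (enum s 0) fun t => enum s (t + 1)

theorem minBounded_patternColor (Φ : Finset (Σ m, LPA.BoundedFormula Empty m)) :
    MinBounded (fun x => Nat.card (Pattern Φ x)) (patternColor Φ) := by
  intro s x hx hmin
  have h := patternCode_lt Φ (enum s 0) fun t => enum s (t + 1)
  rw [enum_zero_eq hx hmin] at h
  simpa only [patternColor, enum_zero_eq hx hmin] using h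

/-- In a min-homogeneous set for the pattern colouring, the pattern over the `j`-th element is the
same for all blocks of elements to the right of it. -/
theorem MinHom.pattern_eq {Φ : Finset (Σ m, LPA.BoundedFormula Empty m)} {k : ℕ} {Y : Finset ℕ}
    (hY : MinHom (k + 2) (patternColor Φ) Y) {j l l' : ℕ} (hl : j < l) (hl' : j < l')
    (hk : l + k < Y.card) (hk' : l' + k < Y.card) :
    ∃ b b' : ℕ → ℕ, (∀ t ≤ k, b t = enum Y (l + t)) ∧ (∀ t ≤ k, b' t = enum Y (l' + t)) ∧
      pattern Φ (enum Y j) b = pattern Φ (enum Y j) b' := by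
  let S : ℕ → Finset ℕ := fun l =>
    (Finset.range (k + 2)).image (consSeq (enum Y j) fun t => enum Y (l + t))
  have mono : ∀ l, j < l → l + k < Y.card →
      StrictMonoOn (consSeq (enum Y j) fun t => enum Y (l + t)) (Set.Iio (k + 2)) := by
    intro l hl hk x hx y hy hxy
    simp only [Set.mem_Iio] at hx hy
    obtain _ | y := y
    · omega
    obtain _ | x := x
    · exact enum_lt_enum (by omega) (by omega)
    · exact enum_lt_enum (by omega) (by omega)
  have sub : ∀ l, j < l → l + k < Y.card → S l ⊆ Y := by
    intro l hl hk y hy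
    obtain ⟨x, hx, rfl⟩ := Finset.mem_image.1 hy
    rw [Finset.mem_range] at hx
    obtain _ | x := x
    · exact enum_mem (by omega)
    · exact enum_mem (by omega)
  have smin : ∀ l, j < l → l + k < Y.card → (S l).min = enum Y j := by
    intro l hl hk
    refine le_antisymm (Finset.min_le (Finset.mem_image.2 ⟨0, by simp, rfl⟩)) ?_
    refine Finset.le_min fun y hy => ?_
    obtain ⟨x, hx, rfl⟩ := Finset.mem_image.1 hy
    rw [Finset.mem_range] at hx
    exact WithTop.coe_le_coe.2 ((mono l hl hk).monotoneOn (show 0 < k + 2 by omega) hx x.zero_le)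
  have e0 : ∀ l, j < l → l + k < Y.card → enum (S l) 0 = enum Y j := fun l hl hk =>
    enum_image_range (mono l hl hk) (by omega)
  have et : ∀ l, j < l → l + k < Y.card → ∀ t ≤ k, enum (S l) (t + 1) = enum Y (l + t) :=
    fun l hl hk t ht => enum_image_range (mono l hl hk) (by omega)
  refine ⟨_, _, et l hl hk, et l' hl' hk', ?_⟩
  have h := hY (S l) (sub l hl hk) (S l') (sub l' hl' hk') (card_image_range (mono l hl hk))
    (card_image_range (mono l' hl' hk')) ((smin l hl hk).trans (smin l' hl' hk').symm)
  rw [patternColor, patternColor, e0 l hl hk, e0 l' hl' hk'] at h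
  exact pattern_eq_of_patternCode_eq h

/-- Below a Hardy function one finds rapidly growing sequences that are indiscernible as quantifier
bounds for finitely many given formulas. -/
theorem exists_hardy_indiscernible (Φ : Finset (Σ m, LPA.BoundedFormula Empty m)) (k : ℕ) :
    ∃ γ : ONote, γ.NF ∧ ∀ a, 1 ≤ a → ∃ c : ℕ → ℕ, a ≤ c 0 ∧ (∀ j ≤ k, c j ^ c j < c (j + 1)) ∧
      (∀ j ≤ k, c j < hardy γ a) ∧ ∀ φ ∈ Φ, quantDepth φ.2 ≤ k + 1 → ∀ j l, j < l → l ≤ k →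
        ∀ v : Fin φ.1 → ℕ, (∀ i, v i ≤ c j) →
          (bEval φ.2 (fun t => c (j + 1 + t)) v ↔ bEval φ.2 (fun t => c (l + t)) v) := by
  obtain ⟨γ, hγ, H⟩ := exists_hardy_minHom (k + 1) (2 * k + 2) (isElem_card_pattern Φ)
    fun x => by rw [card_pattern]; positivity
  refine ⟨γ, hγ, fun a ha => ?_⟩
  obtain ⟨Y, hYa, hY, hcard⟩ := H _ (minBounded_patternColor Φ) a
  have hmem : ∀ j < Y.card, a ≤ enum Y j ∧ enum Y j < hardy γ a := fun j hj =>
    Finset.mem_Ico.1 (hYa (enum_mem hj))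
  refine ⟨enum Y, (hmem 0 (by omega)).1, fun j hj => ?_, fun j hj => (hmem j (by omega)).2,
    fun φ hφ hd j l hjl hl v hv => ?_⟩
  · obtain ⟨b, b', hb, hb', h⟩ := hY.pattern_eq (l := j + 1) (l' := j + 2) (j := j) (by omega)
      (by omega) (by omega) (by omega)
    have h2 := congrArg (fun p => p.2.val) h
    simp only [pattern, hb 0 (Nat.zero_le _), hb' 0 (Nat.zero_le _), add_zero] at h2
    have h3 : enum Y (j + 1) < enum Y (j + 2) := enum_lt_enum (by omega) (by omega)
    have h4 : enum Y j ^ enum Y j < (enum Y j + 1) ^ (enum Y j + 1) :=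
      (Nat.pow_le_pow_left (Nat.le_succ _) _).trans_lt (Nat.pow_lt_pow_right (by
        have := (hmem j (by omega)).1
        omega) (Nat.lt_succ_self _))
    omega
  · obtain ⟨b, b', hb, hb', h⟩ := hY.pattern_eq (l := j + 1) (l' := l) (j := j) (by omega)
      hjl (by omega) (by omega)
    have h1 := congrFun (congrArg Prod.fst h)
      ⟨⟨φ, hφ⟩, fun i => ⟨v i, Nat.lt_succ_of_le (hv i)⟩⟩
    simp only [pattern] at h1
    rw [bEval_congr φ.2 (b' := b) (fun t ht => (hb t (by omega)).symm),
      bEval_congr φ.2 (b := fun t => enum Y (l + t)) (b' := b')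
        (fun t ht => (hb' t (by omega)).symm), h1]

open Filter

/-- A family of rapidly growing sequences `c 0 i < c 1 i < …` of natural numbers which, along an
ultrafilter, are indiscernible as quantifier bounds for all formulas. -/
structure IndiscernibleCut (I : Type) where
  /-- The ultrafilter. -/
  U : Ultrafilter I
  /-- The sequences. -/
  c : ℕ → I → ℕ
  two_le : ∀ᶠ i in U, 2 ≤ c 0 i
  growth : ∀ j, ∀ᶠ i in U, c j i ^ c j i < c (j + 1) i
  indiscernible : ∀ (m : ℕ) (φ : LPA.BoundedFormula Empty m) (j l : ℕ), j < l → ∀ᶠ i in U,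
    ∀ v : Fin m → ℕ, (∀ a, v a ≤ c j i) →
      (bEval φ (fun t => c (j + 1 + t) i) v ↔ bEval φ (fun t => c (l + t) i) v)

namespace IndiscernibleCut

variable {I : Type} (D : IndiscernibleCut I)

/-- The ultrapower of `ℕ` in which the cut is taken. -/
abbrev Ultrapower : Type := (D.U : Filter I).Product fun _ => ℕ

/-- The class of a function in the ultrapower. -/
def cls (f : I → ℕ) : D.Ultrapower := f

/-- `f` is below the `j`-th element of the cut. -/
def Below (j : ℕ) (f : I → ℕ) : Prop := ∀ᶠ i in D.U, f i < D.c j i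

variable {D}

theorem cls_eq_cls {f g : I → ℕ} : D.cls f = D.cls g ↔ ∀ᶠ i in D.U, f i = g i := Quotient.eq

theorem funMap_cls {n : ℕ} (F : LPA.Functions n) (f : Fin n → I → ℕ) :
    Structure.funMap F (fun a => D.cls (f a)) = D.cls fun i => Structure.funMap F fun a => f a i :=
  Ultraproduct.funMap_cast F f

theorem two_le_c (j : ℕ) : ∀ᶠ i in D.U, 2 ≤ D.c j i := by
  induction j with
  | zero => exact D.two_le
  | succ j ih =>
    filter_upwards [ih, D.growth j] with i h1 h2
    have := Nat.le_self_pow (by omega : D.c j i ≠ 0) (D.c j i)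
    omega

theorem Below.succ {j : ℕ} {f : I → ℕ} (h : D.Below j f) : D.Below (j + 1) f := by
  filter_upwards [h, two_le_c j, D.growth j] with i h0 h1 h2
  have := Nat.le_self_pow (by omega : D.c j i ≠ 0) (D.c j i)
  omega

theorem Below.mono {j l : ℕ} {f : I → ℕ} (h : D.Below j f) (hjl : j ≤ l) : D.Below l f := by
  induction hjl with
  | refl => exact h
  | step _ ih => exact ih.succ

theorem exists_common_bound {n : ℕ} {f : Fin n → I → ℕ} (hf : ∀ a, ∃ j, D.Below j (f a)) :
    ∃ j, ∀ a, D.Below j (f a) := by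
  choose j hj using hf
  exact ⟨Finset.univ.sup j, fun a => (hj a).mono (Finset.le_sup (Finset.mem_univ a))⟩

variable (D) in
/-- The initial segment of the ultrapower determined by the cut. -/
def model : LPA.Substructure D.Ultrapower where
  carrier := {x | ∃ f : I → ℕ, D.cls f = x ∧ ∃ j, D.Below j f}
  fun_mem {n} F x hx := by
    choose f hf hj using hx
    obtain ⟨j, hj⟩ := exists_common_bound hj
    obtain rfl : (fun a => D.cls (f a)) = x := funext hf
    rw [funMap_cls]
    refine ⟨_, rfl, j + 1, ?_⟩
    match n, F with
    | _, ArithFunc.zero => filter_upwards [two_le_c (j + 1)] with i h; exact two_pos.trans_le h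
    | _, ArithFunc.one => filter_upwards [two_le_c (j + 1)] with i h; exact one_lt_two.trans_le h
    | _, ArithFunc.add =>
      filter_upwards [two_le_c j, D.growth j, hj 0, hj 1] with i h1 h2 h3 h4
      change f 0 i + f 1 i < D.c (j + 1) i
      have := Nat.pow_le_pow_right (by omega : 0 < D.c j i) h1
      nlinarith
    | _, ArithFunc.mul =>
      filter_upwards [two_le_c j, D.growth j, hj 0, hj 1] with i h1 h2 h3 h4
      change f 0 i * f 1 i < D.c (j + 1) i
      have := Nat.pow_le_pow_right (by omega : 0 < D.c j i) h1
      nlinarith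
    | _, ArithFunc.exp =>
      filter_upwards [two_le_c j, D.growth j, hj 0, hj 1] with i h1 h2 h3 h4
      change f 0 i ^ f 1 i < D.c (j + 1) i
      exact ((Nat.pow_le_pow_left h3.le _).trans
        (Nat.pow_le_pow_right (by omega) h4.le)).trans_lt h2

/-- The element of the cut represented by a function. -/
def ofFun (f : I → ℕ) (hf : ∃ j, D.Below j f) : D.model := ⟨f, f, rfl, hf⟩

theorem exists_ofFun (x : D.model) : ∃ f hf, ofFun f hf = x := by
  obtain ⟨_, f, rfl, hf⟩ := x
  exact ⟨f, hf, rfl⟩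

theorem ofFun_inj {f g : I → ℕ} {hf : ∃ j, D.Below j f} {hg : ∃ j, D.Below j g} :
    ofFun f hf = ofFun g hg ↔ ∀ᶠ i in D.U, f i = g i :=
  Subtype.ext_iff.trans cls_eq_cls

theorem funMap_ofFun {n : ℕ} (F : LPA.Functions n) (f : Fin n → I → ℕ)
    (hf : ∀ a, ∃ j, D.Below j (f a)) :
    ∃ h, Structure.funMap F (fun a => ofFun (f a) (hf a)) =
      ofFun (fun i => Structure.funMap F fun a => f a i) h := by
  have h := funMap_cls (D := D) F f
  have hm : D.cls (fun i => Structure.funMap F fun a => f a i) ∈ D.model := by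
    rw [← h]
    exact D.model.fun_mem F _ fun a => (ofFun (f a) (hf a)).2
  obtain ⟨g, hg, j, hj⟩ := hm
  refine ⟨⟨j, ?_⟩, Subtype.ext h⟩
  filter_upwards [hj, cls_eq_cls.1 hg] with i h1 h2
  exact h2 ▸ h1

theorem realize_term_ofFun {n : ℕ} (t : LPA.Term (Empty ⊕ Fin n)) (f : Fin n → I → ℕ)
    (hf : ∀ a, ∃ j, D.Below j (f a)) :
    ∃ h, t.realize (Sum.elim (fun e => e.elim) fun a => ofFun (f a) (hf a)) =
      ofFun (fun i => t.realize (Sum.elim (fun e => e.elim) fun a => f a i)) h := by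
  induction t with
  | var x =>
    obtain e | a := x
    · exact e.elim
    · exact ⟨hf a, rfl⟩
  | func F ts ih =>
    choose h1 h2 using ih
    simp only [Term.realize, h2]
    exact funMap_ofFun F _ h1

theorem relMap_ofFun {n : ℕ} (R : LPA.Relations n) (f : Fin n → I → ℕ)
    (hf : ∀ a, ∃ j, D.Below j (f a)) :
    Structure.RelMap R (fun a => ofFun (f a) (hf a)) ↔
      ∀ᶠ i in D.U, Structure.RelMap R fun a => f a i :=
  relMap_quotient_mk' (s := (D.U : Filter I).productSetoid fun _ => ℕ) R f

theorem realize_equal_ofFun {n : ℕ} (t₁ t₂ : LPA.Term (Empty ⊕ Fin n)) (f : Fin n → I → ℕ)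
    (hf : ∀ a, ∃ j, D.Below j (f a)) :
    (BoundedFormula.equal t₁ t₂).Realize (fun e => e.elim) (fun a => ofFun (f a) (hf a)) ↔
      ∀ᶠ i in D.U, (BoundedFormula.equal t₁ t₂).Realize (fun e => e.elim) (fun a => f a i) := by
  obtain ⟨h1, e1⟩ := realize_term_ofFun t₁ f hf
  obtain ⟨h2, e2⟩ := realize_term_ofFun t₂ f hf
  simp only [BoundedFormula.Realize, e1, e2, ofFun_inj]

theorem realize_rel_ofFun {n l : ℕ} (R : LPA.Relations l) (ts : Fin l → LPA.Term (Empty ⊕ Fin n))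
    (f : Fin n → I → ℕ) (hf : ∀ a, ∃ j, D.Below j (f a)) :
    (BoundedFormula.rel R ts).Realize (fun e => e.elim) (fun a => ofFun (f a) (hf a)) ↔
      ∀ᶠ i in D.U, (BoundedFormula.rel R ts).Realize (fun e => e.elim) (fun a => f a i) := by
  choose h1 h2 using fun b => realize_term_ofFun (ts b) f hf
  simp only [BoundedFormula.Realize, h2, relMap_ofFun]

theorem snoc_ofFun {n : ℕ} {f : Fin n → I → ℕ} (hf : ∀ a, ∃ j, D.Below j (f a)) {g : I → ℕ}
    (hg : ∃ j, D.Below j g) :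
    ∃ h : ∀ a, ∃ j, D.Below j ((Fin.snoc f g : Fin (n + 1) → I → ℕ) a),
      (Fin.snoc (fun a => ofFun (f a) (hf a)) (ofFun g hg) : Fin (n + 1) → D.model) =
      fun a => ofFun ((Fin.snoc f g : Fin (n + 1) → I → ℕ) a) (h a) := by
  have h : ∀ a, ∃ j, D.Below j ((Fin.snoc f g : Fin (n + 1) → I → ℕ) a) := fun a => by
    induction a using Fin.lastCases with
    | last => simpa using hg
    | cast a => simpa using hf a
  refine ⟨h, funext fun a => ?_⟩
  induction a using Fin.lastCases with
  | last => simp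
  | cast a => simp

theorem snoc_apply {n : ℕ} (f : Fin n → I → ℕ) (g : I → ℕ) (i : I) :
    (fun a => (Fin.snoc f g : Fin (n + 1) → I → ℕ) a i) = Fin.snoc (fun a => f a i) (g i) :=
  Fin.comp_snoc (fun h : I → ℕ => h i) f g

/-- Truth in the cut is eventual truth with quantifiers bounded by the elements of the cut. -/
theorem realize_ofFun_iff {n : ℕ} (φ : LPA.BoundedFormula Empty n) {j : ℕ} {f : Fin n → I → ℕ}
    (hf : ∀ a, ∃ j, D.Below j (f a)) (hj : ∀ a, D.Below j (f a)) :
    φ.Realize (fun e => e.elim) (fun a => ofFun (f a) (hf a)) ↔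
      ∀ᶠ i in D.U, bEval φ (fun t => D.c (j + 1 + t) i) fun a => f a i := by
  induction φ generalizing j with
  | falsum => simp [BoundedFormula.Realize, bEval, D.U.neBot.ne]
  | equal t₁ t₂ => exact realize_equal_ofFun t₁ t₂ f hf
  | rel R ts => exact realize_rel_ofFun R ts f hf
  | imp φ ψ ihφ ihψ =>
    rw [BoundedFormula.realize_imp, ihφ hf hj, ihψ hf hj, ← Ultrafilter.eventually_imp]
    rfl
  | all φ ih =>
    have hsnoc : ∀ {g l}, (∀ a, D.Below l (f a)) → D.Below l g →
        ∀ a, D.Below l ((Fin.snoc f g : Fin _ → I → ℕ) a) := fun {g l} hl hg a => by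
      induction a using Fin.lastCases with
      | last => simpa using hg
      | cast a => simpa using hl a
    have hshift : ∀ l i, (fun t => D.c (l + 1 + t) i) = fun t => D.c (l + (t + 1)) i :=
      fun l i => funext fun t => by congr 1; omega
    rw [BoundedFormula.realize_all]
    refine ⟨fun H => ?_, fun H x => ?_⟩
    · by_contra hcon
      rw [← Ultrafilter.eventually_not] at hcon
      simp only [bEval, not_forall] at hcon
      obtain ⟨g, hg⟩ := hcon.choice
      have hgj : D.Below (j + 1) g := hg.mono fun i hi => hi.1
      obtain ⟨h, hs⟩ := snoc_ofFun hf ⟨_, hgj⟩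
      have := H (ofFun g ⟨_, hgj⟩)
      rw [hs, ih h (hsnoc (fun a => (hj a).succ) hgj)] at this
      obtain ⟨i, h1, h2⟩ := (this.and hg).exists
      rw [snoc_apply, hshift] at h1
      exact h2.2 h1
    · obtain ⟨g, ⟨l, hl⟩, rfl⟩ := exists_ofFun x
      obtain ⟨h, hs⟩ := snoc_ofFun hf ⟨l, hl⟩
      have hl' : D.Below (max j l + 1) g := hl.mono (by omega)
      rw [hs, ih h (hsnoc (fun a => (hj a).mono (by omega)) hl')]
      filter_upwards [H, hl', eventually_all.2 hj,
        D.indiscernible _ φ.all j (max j l + 1) (by omega)] with i h1 h2 h3 h4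
      rw [snoc_apply, hshift]
      exact (h4 _ fun a => (h3 a).le).1 h1 (g i) h2

theorem pzero_eq : ∃ h, (pzero : D.model) = ofFun (fun _ => 0) h := by
  obtain ⟨h, e⟩ := funMap_ofFun (D := D) ArithFunc.zero ![] finZeroElim
  exact ⟨h, by rw [pzero, Subsingleton.elim ![] _]; exact e⟩

theorem pone_eq : ∃ h, (pone : D.model) = ofFun (fun _ => 1) h := by
  obtain ⟨h, e⟩ := funMap_ofFun (D := D) ArithFunc.one ![] finZeroElim
  exact ⟨h, by rw [pone, Subsingleton.elim ![] _]; exact e⟩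

theorem vec_ofFun {f g : I → ℕ} (hf : ∃ j, D.Below j f) (hg : ∃ j, D.Below j g) :
    ∃ h : ∀ a, ∃ j, D.Below j (![f, g] a),
      ![ofFun f hf, ofFun g hg] = fun a => ofFun (![f, g] a) (h a) := by
  exact ⟨Fin.forall_fin_two.2 ⟨hf, hg⟩, funext (Fin.forall_fin_two.2 ⟨rfl, rfl⟩)⟩

theorem padd_ofFun {f g : I → ℕ} (hf : ∃ j, D.Below j f) (hg : ∃ j, D.Below j g) :
    ∃ h, padd (ofFun f hf) (ofFun g hg) = ofFun (fun i => f i + g i) h := by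
  obtain ⟨h, e⟩ := vec_ofFun hf hg
  rw [padd, e]
  exact funMap_ofFun ArithFunc.add _ h

theorem pmul_ofFun {f g : I → ℕ} (hf : ∃ j, D.Below j f) (hg : ∃ j, D.Below j g) :
    ∃ h, pmul (ofFun f hf) (ofFun g hg) = ofFun (fun i => f i * g i) h := by
  obtain ⟨h, e⟩ := vec_ofFun hf hg
  rw [pmul, e]
  exact funMap_ofFun ArithFunc.mul _ h

theorem pexp_ofFun {f g : I → ℕ} (hf : ∃ j, D.Below j f) (hg : ∃ j, D.Below j g) :
    ∃ h, pexp (ofFun f hf) (ofFun g hg) = ofFun (fun i => f i ^ g i) h := by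
  obtain ⟨h, e⟩ := vec_ofFun hf hg
  rw [pexp, e]
  exact funMap_ofFun ArithFunc.exp _ h

theorem plt_ofFun {f g : I → ℕ} (hf : ∃ j, D.Below j f) (hg : ∃ j, D.Below j g) :
    plt (ofFun f hf) (ofFun g hg) ↔ ∀ᶠ i in D.U, f i < g i := by
  obtain ⟨h, e⟩ := vec_ofFun hf hg
  rw [plt, e]
  exact relMap_ofFun ArithRel.lt _ h

/-- The induction scheme holds in the cut. -/
theorem induction_model {n : ℕ} (φ : LPA.BoundedFormula Empty (n + 1)) (v : Fin n → D.model)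
    (h0 : φ.Realize (fun e => e.elim) (Fin.snoc v pzero : Fin (n + 1) → D.model))
    (hs : ∀ x : D.model, φ.Realize (fun e => e.elim) (Fin.snoc v x : Fin (n + 1) → D.model) →
      φ.Realize (fun e => e.elim) (Fin.snoc v (padd x pone) : Fin (n + 1) → D.model))
    (x : D.model) : φ.Realize (fun e => e.elim) (Fin.snoc v x : Fin (n + 1) → D.model) := by
  choose f hf hfv using fun a => exists_ofFun (v a)
  obtain rfl : (fun a => ofFun (f a) (hf a)) = v := funext hfv
  obtain ⟨g, ⟨l, hl⟩, rfl⟩ := exists_ofFun x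
  obtain ⟨m, hm⟩ := exists_common_bound hf
  have hfj : ∀ a, D.Below (max l m) (f a) := fun a => (hm a).mono (le_max_right _ _)
  have hgj : D.Below (max l m) g := hl.mono (le_max_left _ _)
  set j := max l m
  let P : I → ℕ → Prop := fun i x =>
    bEval φ (fun t => D.c (j + 1 + t) i) (Fin.snoc (fun a => f a i) x)
  have truth : ∀ {g : I → ℕ} (hg : ∃ j, D.Below j g), D.Below j g →
      (φ.Realize (fun e => e.elim)
        (Fin.snoc (fun a => ofFun (f a) (hf a)) (ofFun g hg) : Fin (n + 1) → D.model) ↔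
        ∀ᶠ i in D.U, P i (g i)) := by
    intro g hg hgj
    obtain ⟨h, hs⟩ := snoc_ofFun hf hg
    have hj : ∀ a, D.Below j ((Fin.snoc f g : Fin _ → I → ℕ) a) := fun a => by
      induction a using Fin.lastCases with
      | last => simpa using hgj
      | cast a => simpa using hfj a
    rw [hs, realize_ofFun_iff φ h hj]
    simp only [snoc_apply, P]
  by_contra hx
  rw [truth _ hgj, ← Ultrafilter.eventually_not] at hx
  have hex : ∀ᶠ i in D.U, ∃ p, p + 1 ≤ g i ∧ P i p ∧ ¬ P i (p + 1) := by
    obtain ⟨hz, ez⟩ := pzero_eq (D := D)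
    rw [ez, truth hz ((two_le_c j).mono fun i h => two_pos.trans_le h)] at h0
    filter_upwards [hx, h0] with i h1 h2
    by_contra! hcon
    have : ∀ p ≤ g i, P i p := fun p => by
      induction p with
      | zero => exact fun _ => h2
      | succ p ih => exact fun hp => hcon p hp (ih (Nat.le_of_succ_le hp))
    exact h1 (this _ le_rfl)
  obtain ⟨p, hp⟩ := hex.choice
  have hpj : D.Below j p := by
    filter_upwards [hp, hgj] with i h1 h2
    omega
  have hpj' : D.Below j fun i => p i + 1 := by
    filter_upwards [hp, hgj] with i h1 h2
    omega
  obtain ⟨h1, e1⟩ := pone_eq (D := D)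
  obtain ⟨h2, e2⟩ := padd_ofFun ⟨j, hpj⟩ h1
  have := hs (ofFun p ⟨j, hpj⟩) ((truth _ hpj).2 (hp.mono fun i hi => hi.2.1))
  rw [e1, e2, truth _ hpj'] at this
  obtain ⟨i, h3, h4⟩ := (this.and hp).exists
  exact h4.2.2 h3

theorem isPAModel : IsPAModel D.model := by
  obtain ⟨hz, ez⟩ := pzero_eq (D := D)
  obtain ⟨ho, eo⟩ := pone_eq (D := D)
  have ad {f g : I → ℕ} {hf : ∃ j, D.Below j f} {hg : ∃ j, D.Below j g} :
      padd (ofFun f hf) (ofFun g hg) = ofFun _ (padd_ofFun hf hg).choose :=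
    (padd_ofFun hf hg).choose_spec
  have mu {f g : I → ℕ} {hf : ∃ j, D.Below j f} {hg : ∃ j, D.Below j g} :
      pmul (ofFun f hf) (ofFun g hg) = ofFun _ (pmul_ofFun hf hg).choose :=
    (pmul_ofFun hf hg).choose_spec
  have ex {f g : I → ℕ} {hf : ∃ j, D.Below j f} {hg : ∃ j, D.Below j g} :
      pexp (ofFun f hf) (ofFun g hg) = ofFun _ (pexp_ofFun hf hg).choose :=
    (pexp_ofFun hf hg).choose_spec
  have all {p : D.model → Prop} (h : ∀ f hf, p (ofFun f hf)) (x : D.model) : p x := by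
    obtain ⟨f, hf, rfl⟩ := exists_ofFun x
    exact h f hf
  refine ⟨all fun f hf => ?_, all fun f hf => all fun g hg => ?_,
    all fun f hf => all fun g hg => all fun h hh => ?_, all fun f hf => ?_, all fun f hf => ?_,
    all fun f hf => all fun g hg => ?_, all fun f hf => all fun g hg => all fun h hh => ?_,
    all fun f hf => all fun g hg => all fun h hh => ?_, all fun f hf => ?_,
    all fun f hf => all fun g hg => all fun h hh => ?_, all fun f hf => all fun g hg => ?_,
    all fun f hf => all fun g hg => all fun h hh => ?_, all fun f hf => ?_, all fun f hf => ?_,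
    all fun f hf => all fun g hg => ?_, all fun f hf => ?_, all fun f hf => all fun g hg => ?_,
    fun n φ v => induction_model φ v⟩
  all_goals simp only [ez, eo, ad, mu, ex, plt_ofFun, ofFun_inj, ← Ultrafilter.eventually_or,
    ← Ultrafilter.eventually_not, ← Ultrafilter.eventually_imp]
  all_goals refine Eventually.of_forall fun i => ?_
  all_goals first | omega | ring

theorem realize_bounded_all {M : Type} [LPA.Structure M] {n : ℕ} (t : LPA.Term (Empty ⊕ Fin n))
    (φ : LPA.BoundedFormula Empty (n + 1)) (v : Fin n → M) :
    ((guardLt t).imp φ).all.Realize (fun e => e.elim) v ↔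
      ∀ x : M, plt x (t.realize (Sum.elim (fun e => e.elim) v)) →
        φ.Realize (fun e => e.elim) (Fin.snoc v x : Fin (n + 1) → M) := by
  have h : ∀ x : M, (liftT t).realize (Sum.elim (fun e => e.elim) (Fin.snoc v x : Fin (n + 1) → M))
      = t.realize (Sum.elim (fun e => e.elim) v) := fun x => by
    rw [liftT, Term.realize_relabel]
    congr 1
    ext a
    obtain e | a := a
    · rfl
    · simp
  refine forall_congr' fun x => imp_congr_left ?_
  refine (BoundedFormula.realize_rel₂ (L := LPA) (R := ArithRel.lt)).trans ?_
  rw [h, Term.realize_var, Sum.elim_inr, Fin.snoc_last, plt]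

/-- `φ` is true in the cut iff it is eventually true. -/
def Absolute (D : IndiscernibleCut I) {n : ℕ} (φ : LPA.BoundedFormula Empty n) : Prop :=
  ∀ (f : Fin n → I → ℕ) (hf : ∀ a, ∃ j, D.Below j (f a)),
    φ.Realize (fun e => e.elim) (fun a => ofFun (f a) (hf a)) ↔
      ∀ᶠ i in D.U, φ.Realize (fun e => e.elim) (fun a => f a i)

theorem Absolute.falsum {n : ℕ} : Absolute D (BoundedFormula.falsum (n := n)) := fun f hf => by
  simp [BoundedFormula.Realize, D.U.neBot.ne]

theorem Absolute.imp {n : ℕ} {φ ψ : LPA.BoundedFormula Empty n} (hφ : Absolute D φ)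
    (hψ : Absolute D ψ) : Absolute D (φ.imp ψ) := fun f hf => by
  simp only [BoundedFormula.realize_imp, hφ f hf, hψ f hf, Ultrafilter.eventually_imp]

theorem Absolute.not {n : ℕ} {φ : LPA.BoundedFormula Empty n} (hφ : Absolute D φ) :
    Absolute D φ.not := hφ.imp .falsum

theorem Absolute.bounded_all {n : ℕ} (t : LPA.Term (Empty ⊕ Fin n))
    {φ : LPA.BoundedFormula Empty (n + 1)} (hφ : Absolute D φ) :
    Absolute D ((guardLt t).imp φ).all := fun f hf => by
  simp only [realize_bounded_all]
  obtain ⟨ht, et⟩ := realize_term_ofFun t f hf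
  rw [et]
  refine ⟨fun H => ?_, fun H x hx => ?_⟩
  · by_contra hcon
    rw [← Ultrafilter.eventually_not] at hcon
    simp only [not_forall] at hcon
    obtain ⟨g, hg⟩ := hcon.choice
    obtain ⟨j, hj⟩ := ht
    have hgj : D.Below j g := by
      filter_upwards [hj, hg] with i h1 h2
      exact lt_trans h2.1 h1
    have := H (ofFun g ⟨j, hgj⟩) ((plt_ofFun _ _).2 (hg.mono fun i hi => hi.1))
    obtain ⟨h, hs⟩ := snoc_ofFun hf ⟨j, hgj⟩
    rw [hs, hφ] at this
    obtain ⟨i, h1, h2⟩ := (this.and hg).exists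
    rw [snoc_apply] at h1
    exact h2.2 h1
  · obtain ⟨g, hg, rfl⟩ := exists_ofFun x
    obtain ⟨h, hs⟩ := snoc_ofFun hf hg
    rw [hs, hφ]
    filter_upwards [H, (plt_ofFun _ _).1 hx] with i h1 h2
    rw [snoc_apply]
    exact h1 _ h2

theorem absolute_of_delta0 {n : ℕ} {φ : LPA.BoundedFormula Empty n} (hφ : Delta0 φ) :
    Absolute D φ := by
  induction hφ with
  | falsum => exact .falsum
  | equal t₁ t₂ => exact fun f hf => realize_equal_ofFun _ _ f hf
  | lt t₁ t₂ => exact fun f hf => realize_rel_ofFun _ _ f hf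
  | imp _ _ h1 h2 => exact h1.imp h2
  | bdAll t _ h => exact h.bounded_all t
  | bdEx t _ h => exact (h.not.bounded_all t).not

end IndiscernibleCut

/-- every provably total computable function of PA is dominated
by a Hardy function: if PA proves `∀x ∃y θ(x,y)` for `θ ∈ Δ₀`, then there is an
ordinal `γ < ε₀` such that for every `n ≥ 2` there is `y < H_γ(n)` with
`ℕ ⊨ θ(n,y)`. -/
theorem provably_total_dominated_by_hardy
    (θ : LPA.BoundedFormula Empty 2) (hθ : Delta0 θ)
    (hprov : PAproves θ.ex.all) :
    ∃ γ : ONote, γ.NF ∧ ∀ n : ℕ, 2 ≤ n →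
      ∃ y : ℕ, y < hardy γ n ∧ θ.Realize (fun e => e.elim) ![n, y] := by
  by_contra! hcon
  choose γ hγ H using exists_hardy_indiscernible
  choose n hn hbad using fun i : Finset (Σ m, LPA.BoundedFormula Empty m) × ℕ =>
    hcon (γ i.1 i.2) (hγ i.1 i.2)
  choose c hc0 hgrow hlt hind using fun i => H i.1 i.2 (n i) (one_le_two.trans (hn i))
  classical
  let U : Ultrafilter (Finset (Σ m, LPA.BoundedFormula Empty m) × ℕ) := Ultrafilter.of atTop
  have hU : ∀ i₀ : Finset (Σ m, LPA.BoundedFormula Empty m) × ℕ, ∀ᶠ i in U, i₀ ≤ i := fun i₀ =>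
    Ultrafilter.of_le atTop (mem_atTop i₀)
  let D : IndiscernibleCut (Finset (Σ m, LPA.BoundedFormula Empty m) × ℕ) :=
    { U := U
      c := fun j i => c i j
      two_le := Eventually.of_forall fun i => (hn i).trans (hc0 i)
      growth := fun j => (hU (∅, j)).mono fun i hi => hgrow i j hi.2
      indiscernible := fun m φ j l hjl => by
        filter_upwards [hU ({⟨m, φ⟩}, max l (quantDepth φ))] with i hi
        exact hind i ⟨m, φ⟩ (hi.1 (Finset.mem_singleton_self _))
          ((le_max_right _ _).trans (hi.2.trans (Nat.le_succ _))) j l hjl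
          ((le_max_left _ _).trans hi.2) }
  have hnD : D.Below 1 n := by
    filter_upwards [D.growth 0, IndiscernibleCut.two_le_c (D := D) 0] with i h1 h2
    have := Nat.le_self_pow (by omega : D.c 0 i ≠ 0) (D.c 0 i)
    exact (hc0 i).trans_lt (this.trans_lt h1)
  have h := hprov D.model inferInstance IndiscernibleCut.isPAModel
  simp only [Sentence.Realize, Formula.Realize, BoundedFormula.realize_all,
    BoundedFormula.realize_ex] at h
  obtain ⟨y, hy⟩ := h (IndiscernibleCut.ofFun n ⟨1, hnD⟩)
  obtain ⟨g, ⟨j, hg⟩, rfl⟩ := IndiscernibleCut.exists_ofFun y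
  obtain ⟨hv, ev⟩ := IndiscernibleCut.vec_ofFun ⟨1, hnD⟩ ⟨j, hg⟩
  have hvec : (Fin.snoc (Fin.snoc default (IndiscernibleCut.ofFun n ⟨1, hnD⟩))
      (IndiscernibleCut.ofFun g ⟨j, hg⟩) : Fin 2 → D.model) =
      ![IndiscernibleCut.ofFun n ⟨1, hnD⟩, IndiscernibleCut.ofFun g ⟨j, hg⟩] :=
    funext (Fin.forall_fin_two.2 ⟨rfl, rfl⟩)
  rw [hvec, ev, Subsingleton.elim default (fun e : Empty => e.elim),
    IndiscernibleCut.absolute_of_delta0 hθ] at hy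
  obtain ⟨i, ⟨h1, h2⟩, h3⟩ := ((hy.and hg).and (hU (∅, j))).exists
  refine hbad i (g i) (h2.trans (hlt i j h3.2)) ?_
  convert h1 using 1
  exact funext (Fin.forall_fin_two.2 ⟨rfl, rfl⟩)
end
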